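/- The monic matrix-valued polynomials Q_n(x) = P_n(x)·Γ_n^{-1} satisfy Q_0(x) = I, x·Q_0(x) = Q_1(x) + X_0, and for every n ≥ 1 the three-term recurrence x·Q_n(x) = Q_{n+1}(x) + Q_n(x)·X_n + Q_{n-1}(x)·Y_n, where X_n = Σ_{i=0}^{2ℓ-1} (q^{2n+1}/2)·(1-q^{2i+2})²/((1-q^{2n+2i+2})(1-q^{2n+2i+4}))·E_{i,i+1} + Σ_{i=1}^{2ℓ} (q^{2n+1}/2)·(1-q^{4ℓ-2i+2})²/((1-q^{4ℓ-2i+2n+2})(1-q^{4ℓ-2i+2n+4}))·E_{i,i-1}, and Y_n = Σ_{i=0}^{2ℓ} (1/4)·(1-q^{2n})²(1-q^{4ℓ+2n+2})²/((1-q^{2n+2i})(1-q^{4ℓ+2n-2i})(1-q^{2n+2i+2})(1-q^{4ℓ-2i+2n+2}))·E_{i,i}. -/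

import Mathlib

open Finset Polynomial MeasureTheory Matrix
open scoped BigOperators ComplexOrder

noncomputable section

/-- q-shifted factorial `(a;p)_n`. -/
def qp (a p : ℂ) (n : ℕ) : ℂ := ∏ j ∈ Finset.range n, (1 - a * p ^ j)

/-- q-Racah polynomial `R_n(μ(x);α,β,γ,δ;p)`. -/
def qRacah (p α β γ δ : ℂ) (n x : ℕ) : ℂ :=
  ∑ k ∈ Finset.range (min n x + 1),
    qp (p ^ (-(n : ℤ))) p k * qp (α * β * p ^ (n + 1)) p k *
        qp (p ^ (-(x : ℤ))) p k * qp (γ * δ * p ^ (x + 1)) p k /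
      (qp (α * p) p k * qp (β * δ * p) p k * qp (γ * p) p k * qp p p k) * p ^ k

/-- `IsUltra C` says that for each base `p`, parameter `β` and degree `n`, `C p β n` is
the continuous q-ultraspherical polynomial: it has degree at most `n` and its values at
`(z+z⁻¹)/2` are given by the symmetric Laurent sum. -/
def IsUltra (C : ℂ → ℂ → ℕ → Polynomial ℂ) : Prop :=
  ∀ (p β : ℂ) (n : ℕ),
    (C p β n).degree ≤ (n : ℕ) ∧
      ∀ z : ℂ, z ≠ 0 →
        (C p β n).eval ((z + z⁻¹) / 2) =
          ∑ r ∈ Finset.range (n + 1),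
            qp β p r * qp β p (n - r) / (qp p p r * qp p p (n - r)) * z ^ ((n : ℤ) - 2 * r)

/-- The matrix-valued polynomial `P_n` (entries in `Polynomial ℂ`); here `L = 2ℓ`. -/
def Pm (q : ℂ) (L : ℕ) (C : ℂ → ℂ → ℕ → Polynomial ℂ) (n : ℕ) :
    Matrix (Fin (L + 1)) (Fin (L + 1)) (Polynomial ℂ) :=
  Matrix.of fun i j =>
    ∑ k ∈ Finset.Icc (i : ℕ) (min L (n + (j : ℕ))),
      Polynomial.C
          ((-1 : ℂ) ^ k *
            q ^ ((n : ℤ) + (2 * (k : ℤ) + 1) * ((k : ℤ) - ((i : ℕ) : ℤ)) +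
                ((j : ℕ) : ℤ) * (2 * (k : ℤ) + 1) + 2 * (k : ℤ) * ((L : ℤ) + (n : ℤ) + 1) -
                (k : ℤ) ^ 2) *
            (qp (q ^ 2) (q ^ 2) k * qp (q ^ 2) (q ^ 2) (k + (i : ℕ)) /
              (qp (q ^ 2) (q ^ 2) (2 * k) * qp (q ^ 2) (q ^ 2) (i : ℕ))) *
            (qp (q ^ (-(2 * (L : ℤ)))) (q ^ 2) k *
                qp (q ^ (-(2 * ((j : ℕ) : ℤ) + 2 * (n : ℤ)))) (q ^ 2) k /
              (qp (q ^ 2) (q ^ 2) k * qp (q ^ (2 * (L : ℤ) + 4)) (q ^ 2) k)) *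
            (qp (q ^ 2) (q ^ 2) (n + (j : ℕ) - k) /
              qp (q ^ (4 * (k : ℤ) + 4)) (q ^ 2) (n + (j : ℕ) - k)) *
            qRacah (q ^ 2) 1 1 (q ^ (-(2 * (n : ℤ) + 2 * ((j : ℕ) : ℤ) + 2)))
              (q ^ (-(2 * (L : ℤ) + 2))) k (j : ℕ)) *
        (C (q ^ 2) (q ^ (-(2 * (k : ℤ)))) (k - (i : ℕ)) *
          C (q ^ 2) (q ^ (2 * (k : ℤ) + 2)) (n + (j : ℕ) - k))

/-- Evaluation of the matrix-valued polynomial `P_n` at a point. -/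
def evP (q : ℂ) (L : ℕ) (C : ℂ → ℂ → ℕ → Polynomial ℂ) (n : ℕ) (x : ℂ) :
    Matrix (Fin (L + 1)) (Fin (L + 1)) ℂ :=
  (Pm q L C n).map (Polynomial.eval x)

/-- The coefficients `α_t(m,n)` of the weight. -/
def alphaC (q : ℂ) (L m n t : ℕ) : ℂ :=
  q ^ (2 * (n : ℤ) * ((L : ℤ) + 1) - (n : ℤ) ^ 2 - (2 * (L : ℤ) + 3) * (t : ℤ) + (t : ℤ) ^ 2 -
      (L : ℤ) + (m : ℤ)) *
    ((1 - q ^ (2 * (L : ℤ) + 2)) / (1 - q ^ (2 * (m : ℤ) + 2))) *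
    (qp (q ^ 2) (q ^ 2) (L - n) * qp (q ^ 2) (q ^ 2) n / qp (q ^ 2) (q ^ 2) L) *
    ((-1 : ℂ) ^ ((m : ℤ) - (t : ℤ)) * qp (q ^ (2 * (m : ℤ) - 2 * (L : ℤ))) (q ^ 2) (n - t) /
      qp (q ^ (2 * (m : ℤ) + 4)) (q ^ 2) (n - t)) *
    (qp (q ^ (2 * (L : ℤ) + 4 - 2 * (t : ℤ))) (q ^ 2) t / qp (q ^ 2) (q ^ 2) t)

/-- The matrix weight `W(x)`. -/
def Wm (q : ℂ) (L : ℕ) (x : ℂ) : Matrix (Fin (L + 1)) (Fin (L + 1)) ℂ :=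
  Matrix.of fun i j =>
    ∑ t ∈ Finset.range (max (i : ℕ) (j : ℕ) + 1),
      alphaC q L (min (i : ℕ) (j : ℕ)) (max (i : ℕ) (j : ℕ)) t *
        (Polynomial.Chebyshev.U ℂ
            ((min (i : ℕ) (j : ℕ) : ℤ) + (max (i : ℕ) (j : ℕ) : ℤ) - 2 * (t : ℤ))).eval x

/-- The antidiagonal involution `J`. -/
def Jm (L : ℕ) : Matrix (Fin (L + 1)) (Fin (L + 1)) ℂ :=
  Matrix.of fun i j => if (i : ℕ) + (j : ℕ) = L then 1 else 0

/-- The diagonal leading-coefficient matrix `Γ_n`. -/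
def Gam (q : ℂ) (L n : ℕ) : Matrix (Fin (L + 1)) (Fin (L + 1)) ℂ :=
  Matrix.diagonal fun i =>
    2 ^ n * q ^ n * qp (q ^ (2 * ((i : ℕ) : ℤ) + 2)) (q ^ 2) n *
        qp (q ^ (2 * (L : ℤ) - 2 * ((i : ℕ) : ℤ) + 2)) (q ^ 2) n /
      (qp (q ^ 2) (q ^ 2) n * qp (q ^ (2 * (L : ℤ) + 4)) (q ^ 2) n)

/-- The squared-norm matrix `G_m`. -/
def Gmat (q : ℂ) (L m : ℕ) : Matrix (Fin (L + 1)) (Fin (L + 1)) ℂ :=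
  Matrix.diagonal fun i =>
    q ^ (2 * (m : ℤ) - (L : ℤ)) * (1 - q ^ (2 * (L : ℤ) + 2)) ^ 2 /
      ((1 - q ^ (2 * (m : ℤ) + 2 * ((i : ℕ) : ℤ) + 2)) *
        (1 - q ^ (2 * (L : ℤ) - 2 * ((i : ℕ) : ℤ) + 2 * (m : ℤ) + 2)))

/-- The unipotent lower triangular matrix `L(x)` of the LDU decomposition. -/
def Lm (q : ℂ) (L : ℕ) (C : ℂ → ℂ → ℕ → Polynomial ℂ) (x : ℂ) :
    Matrix (Fin (L + 1)) (Fin (L + 1)) ℂ :=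
  Matrix.of fun m k =>
    if (k : ℕ) ≤ (m : ℕ) then
      q ^ (((m : ℕ) : ℤ) - ((k : ℕ) : ℤ)) * qp (q ^ 2) (q ^ 2) (m : ℕ) *
          qp (q ^ 2) (q ^ 2) (2 * (k : ℕ) + 1) /
          (qp (q ^ 2) (q ^ 2) ((m : ℕ) + (k : ℕ) + 1) * qp (q ^ 2) (q ^ 2) (k : ℕ)) *
        (C (q ^ 2) (q ^ (2 * (k : ℕ) + 2)) ((m : ℕ) - (k : ℕ))).eval x
    else 0

/-- The claimed inverse of `L(x)`. -/
def Linv (q : ℂ) (L : ℕ) (C : ℂ → ℂ → ℕ → Polynomial ℂ) (x : ℂ) :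
    Matrix (Fin (L + 1)) (Fin (L + 1)) ℂ :=
  Matrix.of fun k n =>
    if (n : ℕ) ≤ (k : ℕ) then
      q ^ ((2 * ((k : ℕ) : ℤ) + 1) * (((k : ℕ) : ℤ) - ((n : ℕ) : ℤ))) *
          qp (q ^ 2) (q ^ 2) (k : ℕ) * qp (q ^ 2) (q ^ 2) ((k : ℕ) + (n : ℕ)) /
          (qp (q ^ 2) (q ^ 2) (2 * (k : ℕ)) * qp (q ^ 2) (q ^ 2) (n : ℕ)) *
        (C (q ^ 2) (q ^ (-(2 * ((k : ℕ) : ℤ)))) ((k : ℕ) - (n : ℕ))).eval x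
    else 0

/-- The constants `c_k(ℓ)`. -/
def ckC (q : ℂ) (L k : ℕ) : ℂ :=
  q ^ (-(L : ℤ)) / 4 * (1 - q ^ (4 * k + 2)) * qp (q ^ 2) (q ^ 2) (L + k + 1) *
      qp (q ^ 2) (q ^ 2) (L - k) * qp (q ^ 2) (q ^ 2) k ^ 4 /
    (qp (q ^ 2) (q ^ 2) (2 * k + 1) ^ 2 * qp (q ^ 2) (q ^ 2) L ^ 2)

/-- The diagonal part `T(x)` of the LDU decomposition. -/
def Tm (q : ℂ) (L : ℕ) (x : ℂ) : Matrix (Fin (L + 1)) (Fin (L + 1)) ℂ :=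
  Matrix.diagonal fun k =>
    ckC q L (k : ℕ) *
      (4 * ∏ j ∈ Finset.Icc 1 (k : ℕ), (1 - 2 * (2 * x ^ 2 - 1) * q ^ (2 * j) + q ^ (4 * j)))

/-- The coefficient matrix `M₁(z)` of the q-difference operator `D₁`. -/
def M1f (q : ℂ) (L : ℕ) (z : ℂ) : Matrix (Fin (L + 1)) (Fin (L + 1)) ℂ :=
  Matrix.of fun i j =>
    if (j : ℕ) = (i : ℕ) + 1 then
      -(q ^ (1 - ((i : ℕ) : ℤ)) * (1 - q ^ (2 * (i : ℕ) + 2)) / (1 - q ^ 2) ^ 2 *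
        (z / (1 - z ^ 2)))
    else if (j : ℕ) = (i : ℕ) then
      q ^ (1 - ((i : ℕ) : ℤ)) / (1 - q ^ 2) ^ 2 *
        ((1 - q ^ (2 * (i : ℕ) + 2) * z ^ 2) / (1 - z ^ 2))
    else 0

/-- `M₂(z) = J M₁(z) J`. -/
def M2f (q : ℂ) (L : ℕ) (z : ℂ) : Matrix (Fin (L + 1)) (Fin (L + 1)) ℂ :=
  Jm L * M1f q L z * Jm L

/-- The eigenvalue matrix `Λ_n(1)`. -/
def Lam1 (q : ℂ) (L n : ℕ) : Matrix (Fin (L + 1)) (Fin (L + 1)) ℂ :=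
  Matrix.diagonal fun j =>
    (q ^ (-((j : ℕ) : ℤ) - (n : ℤ) - 1) + q ^ (((j : ℕ) : ℤ) + (n : ℤ) + 1)) / (q⁻¹ - q) ^ 2

/-- The eigenvalue matrix `Λ_n(2) = J Λ_n(1) J`. -/
def Lam2 (q : ℂ) (L n : ℕ) : Matrix (Fin (L + 1)) (Fin (L + 1)) ℂ :=
  Jm L * Lam1 q L n * Jm L

/-- The diagonal coefficient matrix `K₁(z)` of the decoupled operator. -/
def K1f (q : ℂ) (L : ℕ) (z : ℂ) : Matrix (Fin (L + 1)) (Fin (L + 1)) ℂ :=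
  Matrix.diagonal fun i =>
    q ^ (1 - ((i : ℕ) : ℤ)) / (1 - q ^ 2) ^ 2 *
      ((1 - q ^ (2 * (i : ℕ) + 2) * z ^ 2) / (1 - z ^ 2))

/-- The symmetric Laurent polynomial `Ĉ_k(z;β|p)`. -/
def Chat (p β : ℂ) (k : ℕ) (z : ℂ) : ℂ :=
  ∑ r ∈ Finset.range (k + 1),
    qp β p r * qp β p (k - r) / (qp p p r * qp p p (k - r)) * z ^ ((k : ℤ) - 2 * (r : ℤ))

/-- The matrix polynomials `R_n(x) = L(x)ᵀ P_n(x) Γ_n⁻¹`. -/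
def Rmat (q : ℂ) (L : ℕ) (C : ℂ → ℂ → ℕ → Polynomial ℂ) (n : ℕ) (x : ℂ) :
    Matrix (Fin (L + 1)) (Fin (L + 1)) ℂ :=
  (Lm q L C x)ᵀ * evP q L C n x * (Gam q L n)⁻¹


/-- The matrix `X_n` of the monic three-term recurrence. -/
def Xmat (q : ℂ) (L n : ℕ) : Matrix (Fin (L + 1)) (Fin (L + 1)) ℂ :=
  Matrix.of fun i j =>
    if (j : ℕ) = (i : ℕ) + 1 then
      q ^ (2 * n + 1) / 2 * (1 - q ^ (2 * ((i : ℕ) : ℤ) + 2)) ^ 2 /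
        ((1 - q ^ (2 * (n : ℤ) + 2 * ((i : ℕ) : ℤ) + 2)) *
          (1 - q ^ (2 * (n : ℤ) + 2 * ((i : ℕ) : ℤ) + 4)))
    else if (i : ℕ) = (j : ℕ) + 1 then
      q ^ (2 * n + 1) / 2 * (1 - q ^ (2 * (L : ℤ) - 2 * ((i : ℕ) : ℤ) + 2)) ^ 2 /
        ((1 - q ^ (2 * (L : ℤ) - 2 * ((i : ℕ) : ℤ) + 2 * (n : ℤ) + 2)) *
          (1 - q ^ (2 * (L : ℤ) - 2 * ((i : ℕ) : ℤ) + 2 * (n : ℤ) + 4)))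
    else 0

/-- The matrix `Y_n` of the monic three-term recurrence. -/
def Ymat (q : ℂ) (L n : ℕ) : Matrix (Fin (L + 1)) (Fin (L + 1)) ℂ :=
  Matrix.diagonal fun i =>
    1 / 4 * ((1 - q ^ (2 * (n : ℤ))) ^ 2 * (1 - q ^ (2 * (L : ℤ) + 2 * (n : ℤ) + 2)) ^ 2) /
      ((1 - q ^ (2 * (n : ℤ) + 2 * ((i : ℕ) : ℤ))) *
        (1 - q ^ (2 * (L : ℤ) + 2 * (n : ℤ) - 2 * ((i : ℕ) : ℤ))) *
        (1 - q ^ (2 * (n : ℤ) + 2 * ((i : ℕ) : ℤ) + 2)) *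
        (1 - q ^ (2 * (L : ℤ) - 2 * ((i : ℕ) : ℤ) + 2 * (n : ℤ) + 2)))


/-! ### Auxiliary material -/

lemma qp_zero (a p : ℂ) : qp a p 0 = 1 := by simp [qp]

lemma qp_succ (a p : ℂ) (n : ℕ) : qp a p (n + 1) = qp a p n * (1 - a * p ^ n) := by
  simp [qp, Finset.prod_range_succ]

lemma qp_succ' (a p : ℂ) (n : ℕ) : qp a p (n + 1) = (1 - a) * qp (a * p) p n := by
  simp only [qp, Finset.prod_range_succ']
  rw [mul_comm]
  congr 1
  · simp
  · refine Finset.prod_congr rfl fun j _ => ?_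
    ring

lemma qp_add (a p : ℂ) (m n : ℕ) : qp a p (m + n) = qp a p m * qp (a * p ^ m) p n := by
  simp only [qp, Finset.prod_range_add]
  congr 1
  refine Finset.prod_congr rfl fun j _ => ?_
  ring

/-- nonresonance -/
def Good (p : ℂ) : Prop := p ≠ 0 ∧ ∀ m : ℕ, 0 < m → 1 - p ^ m ≠ 0

lemma qpp_ne {p : ℂ} (hp : Good p) (n : ℕ) : qp p p n ≠ 0 := by
  unfold qp
  refine Finset.prod_ne_zero_iff.2 fun j _ => ?_
  have := hp.2 (j + 1) (by omega)
  rwa [pow_succ'] at this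

lemma qpk_ne {p : ℂ} (hp : Good p) (k n : ℕ) : qp (p ^ (k + 1)) p n ≠ 0 := by
  unfold qp
  refine Finset.prod_ne_zero_iff.2 fun j _ => ?_
  have := hp.2 (k + 1 + j) (by omega)
  rwa [pow_add] at this

/-- falling product -/
def hh (p : ℂ) (a r : ℕ) : ℂ := qp (p ^ a) p⁻¹ r

lemma hh_zero (p : ℂ) (a : ℕ) : hh p a 0 = 1 := by simp [hh, qp_zero]

lemma hh_succ (p : ℂ) (a r : ℕ) : hh p a (r + 1) = hh p a r * (1 - p ^ a * p⁻¹ ^ r) := by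
  simp [hh, qp_succ]

lemma hh_succ' {p : ℂ} (hp : Good p) (a r : ℕ) :
    hh p (a + 1) (r + 1) = (1 - p ^ (a + 1)) * hh p a r := by
  have h0 := hp.1
  rw [hh, qp_succ', hh, pow_succ, mul_assoc, mul_inv_cancel₀ h0, mul_one]

lemma pow_inv_sub {p : ℂ} (hp : Good p) {a r : ℕ} (h : r ≤ a) : p ^ a * p⁻¹ ^ r = p ^ (a - r) := by
  obtain ⟨c, rfl⟩ := Nat.exists_eq_add_of_le h
  have h0 := hp.1
  rw [inv_pow, pow_add, Nat.add_sub_cancel_left]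
  field_simp

lemma hh_eq_zero {p : ℂ} (hp : Good p) {a r : ℕ} (h : a < r) : hh p a r = 0 := by
  unfold hh qp
  refine Finset.prod_eq_zero (Finset.mem_range.2 h) ?_
  rw [pow_inv_sub hp le_rfl]; simp

lemma hh_ne {p : ℂ} (hp : Good p) {a r : ℕ} (h : r ≤ a) : hh p a r ≠ 0 := by
  unfold hh qp
  refine Finset.prod_ne_zero_iff.2 fun j hj => ?_
  have := Finset.mem_range.1 hj
  rw [pow_inv_sub hp (by omega)]
  exact hp.2 _ (by omega)

lemma hh_shift {p : ℂ} (hp : Good p) (a r : ℕ) :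
    (1 - p ^ a) * hh p (a - 1) r = hh p a r * (1 - p ^ a * p⁻¹ ^ r) := by
  rcases a with _ | a
  · rcases r with _ | r
    · simp
    · rw [hh_eq_zero hp (a := 0) (r := r + 1) (by omega)]; simp
  · rw [← hh_succ, hh_succ' hp]; simp

lemma hh_mul {p : ℂ} (a r : ℕ) (hp : Good p) : hh p (a + r) r * qp p p a = qp p p (a + r) := by
  induction r with
  | zero => simp [hh_zero]
  | succ r ih =>
    rw [← add_assoc, hh_succ' hp, mul_assoc, ih, qp_succ, pow_succ]
    ring

/-- sign/power factor -/
def ee (p : ℂ) (r : ℕ) : ℂ := ∏ s ∈ Finset.range r, (-p ^ s)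

lemma ee_ne {p : ℂ} (hp : Good p) (r : ℕ) : ee p r ≠ 0 := by
  unfold ee
  refine Finset.prod_ne_zero_iff.2 fun j _ => ?_
  have := hp.1
  simp [this]

lemma qp_neg {p : ℂ} (hp : Good p) (a r : ℕ) :
    qp ((p ^ a)⁻¹) p r = ee p r * ((p ^ a)⁻¹) ^ r * hh p a r := by
  have h0 := hp.1
  induction r with
  | zero => simp [qp_zero, ee, hh_zero]
  | succ r ih =>
    rw [qp_succ, ih, hh_succ, show ee p (r + 1) = ee p r * (-p ^ r) from by
      simp [ee, Finset.prod_range_succ]]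
    simp only [inv_pow]
    field_simp
    ring

/-- Racah weight -/
def ww (p : ℂ) (L n j r : ℕ) : ℂ :=
  hh p j r * hh p (n + L + 1) r / (hh p (n + j) r * hh p L r * qp p p r ^ 2)

/-- basis in the degree -/
def ph (p : ℂ) (k r : ℕ) : ℂ := qp ((p ^ k)⁻¹) p r * qp (p ^ (k + 1)) p r

/-- q-Racah -/
def RR (p : ℂ) (L n j k : ℕ) : ℂ := ∑ r ∈ Finset.range (k + 1), ph p k r * ww p L n j r

lemma ph_succ (p : ℂ) (k r : ℕ) :
    ph p k (r + 1) = ph p k r * ((1 - (p ^ k)⁻¹ * p ^ r) * (1 - p ^ (k + 1) * p ^ r)) := by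
  simp only [ph, qp_succ]; ring

lemma ph_eq_zero {p : ℂ} (hp : Good p) (k : ℕ) : ph p k (k + 1) = 0 := by
  have := hp.1
  rw [ph_succ, inv_mul_cancel₀ (pow_ne_zero _ this)]; simp

lemma qRacah_eq {p : ℂ} (hp : Good p) (L n j k : ℕ) :
    qRacah p 1 1 ((p ^ (n + j + 1))⁻¹) ((p ^ (L + 1))⁻¹) k j = RR p L n j k := by
  have h0 := hp.1
  unfold qRacah RR
  have hsub : Finset.range (min k j + 1) ⊆ Finset.range (k + 1) := by
    intro r; simp only [Finset.mem_range]; omega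
  rw [← Finset.sum_subset hsub]
  · refine Finset.sum_congr rfl fun r _ => ?_
    rw [_root_.zpow_neg, zpow_natCast, _root_.zpow_neg, zpow_natCast]
    have e1 : (p ^ (n + j + 1))⁻¹ * (p ^ (L + 1))⁻¹ * p ^ (j + 1) = (p ^ (n + L + 1))⁻¹ := by
      field_simp; ring
    have e2 : 1 * (p ^ (L + 1))⁻¹ * p = (p ^ L)⁻¹ := by field_simp; ring
    have e3 : (p ^ (n + j + 1))⁻¹ * p = (p ^ (n + j))⁻¹ := by field_simp; ring
    rw [e1, e2, e3, qp_neg hp j, qp_neg hp (n + L + 1), qp_neg hp L, qp_neg hp (n + j)]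
    unfold ph ww
    have he := ee_ne hp r
    have : ((p ^ j)⁻¹) ^ r * ((p ^ (n + L + 1))⁻¹) ^ r * p ^ r
        = ((p ^ L)⁻¹) ^ r * ((p ^ (n + j))⁻¹) ^ r := by
      rw [← mul_pow, ← mul_pow, ← mul_pow]
      congr 1
      field_simp; ring
    have hA : ((p ^ L)⁻¹) ^ r ≠ 0 := by positivity
    have hB : ((p ^ (n + j))⁻¹) ^ r ≠ 0 := by positivity
    generalize ((p ^ L)⁻¹) ^ r = A at *
    generalize ((p ^ (n + j))⁻¹) ^ r = B at *
    simp only [one_mul]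
    have hx : ee p r ^ 2 * (A * B) ≠ 0 := by positivity
    rw [← mul_div_assoc, ← mul_div_mul_left _ (hh p (n + j) r * hh p L r * qp p p r ^ 2) hx,
      div_mul_eq_mul_div]
    congr 1
    · rw [← this]; ring
    · ring
  · intro r h1 h2
    simp only [Finset.mem_range] at h1 h2
    rw [ww, hh_eq_zero hp (a := j) (by omega)]
    simp

lemma RR_rec2 {p : ℂ} (hp : Good p) (l n j k : ℕ) (hk : k < n + j) (hkL : k ≤ j + l) :
    (1 - p ^ (n + j)) * (1 - p ^ (l + n + 1)) * RR p (j + l) n j k =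
      p ^ n * (1 - p ^ j) * (1 - p ^ (l + 1)) * RR p (j + l) n (j - 1) k +
      (1 - p ^ n) * (1 - p ^ (j + l + n + 1)) * RR p (j + l) (n - 1) j k := by
  have h0 := hp.1
  unfold RR
  simp only [Finset.mul_sum]
  rw [← Finset.sum_add_distrib]
  refine Finset.sum_congr rfl fun r hr => ?_
  have hr := Finset.mem_range.1 hr
  have hN : 1 - p ^ (n + j) * p⁻¹ ^ r ≠ 0 := by
    rw [pow_inv_sub hp (by omega)]; exact hp.2 _ (by omega)
  have hN1 := hh_ne hp (a := n + j) (r := r) (by omega)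
  have hN2 := hh_ne hp (a := n + j - 1) (r := r) (by omega)
  have hL := hh_ne hp (a := j + l) (r := r) (by omega)
  have hq := qpp_ne hp r
  have sN := hh_shift hp (n + j) r
  have T1 : (1 - p ^ j) * ww p (j + l) n (j - 1) r * (1 - p ^ (n + j) * p⁻¹ ^ r)
      = (1 - p ^ (n + j)) * (1 - p ^ j * p⁻¹ ^ r) * ww p (j + l) n j r := by
    have sj := hh_shift hp j r
    rcases j with _ | j
    · simp at sj
      simp only [ww]
      rcases sj with h | h <;> simp [h]
    · simp only [ww, Nat.add_sub_cancel, ← add_assoc] at *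
      rw [mul_div_assoc', mul_div_assoc', div_mul_eq_mul_div, div_eq_div_iff (by positivity) (by positivity)]
      linear_combination (hh p (n + j + 1 + l + 1) r * (1 - p ^ (n + j + 1) * p⁻¹ ^ r) * hh p (n+j+1) r * hh p (j + 1 + l) r * qp p p r ^ 2) * sj - ((1 - p ^ (j+1) * p⁻¹ ^ r) * hh p (j+1) r * hh p (n + j + 1 + l + 1) r * hh p (j + 1 + l) r * qp p p r ^ 2) * sN
  have T2 : (1 - p ^ n) * (1 - p ^ (j + l + n + 1)) * ww p (j + l) (n - 1) j r * (1 - p ^ (n + j) * p⁻¹ ^ r)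
      = (1 - p ^ n) * (1 - p ^ (j + l + n + 1) * p⁻¹ ^ r) * (1 - p ^ (n + j)) * ww p (j + l) n j r := by
    rcases n with _ | n
    · simp
    · have sj := hh_shift hp (n + 1 + (j + l) + 1) r
      have i1 : j + l + (n + 1) + 1 = n + 1 + (j + l) + 1 := by ring
      have i2 : n + 1 + j - 1 = n + j := by omega
      have i3 : n + 1 + (j + l) + 1 - 1 = n + (j + l) + 1 := by omega
      rw [i2] at sN hN2
      rw [i3] at sj
      simp only [ww, Nat.add_sub_cancel, i1] at *
      rw [mul_div_assoc', mul_div_assoc', div_mul_eq_mul_div, div_eq_div_iff (by positivity) (by positivity)]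
      linear_combination (1 - p ^ (n + 1)) * (hh p j r * (1 - p ^ (n + 1 + j) * p⁻¹ ^ r) * hh p (n+1+j) r * hh p (j + l) r * qp p p r ^ 2) * sj - (1 - p ^ (n + 1)) * ((1 - p ^ (n + 1 + (j + l) + 1) * p⁻¹ ^ r) * hh p j r * hh p (n + 1 + (j + l) + 1) r * hh p (j + l) r * qp p p r ^ 2) * sN
  apply mul_right_cancel₀ hN
  generalize ww p (j + l) n j r = w1 at *
  generalize ww p (j + l) (n - 1) j r = w2 at *
  generalize ww p (j + l) n (j - 1) r = w3 at *
  generalize ph p k r = f at *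
  generalize p⁻¹ ^ r = R at *
  simp only [pow_add] at *
  linear_combination (-f * p ^ n * (1 - p ^ l * p ^ 1)) * T1 - f * T2

lemma main_id (p a b c R : ℂ) (hR : R ≠ 0) (h1 : 1 - p * R ≠ 0) (h2 : 1 - a * b * p ≠ 0)
    (h3 : R - b * c ≠ 0) :
    (1 - a * b * R * p ^ 3) * (1 - c * a * p) * ((1 - b * R⁻¹) * (1 - a * (b * c) * p * R⁻¹) /
        ((1 - b * c * R⁻¹) * (1 - p * R) ^ 2))
      - (1 - a * b * p) * (((1 - b * R⁻¹) * (1 - a * (b * c) * p * p) /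
        ((1 - a * b * p) * (1 - b * c * R⁻¹) * (1 - p * R) ^ 2)) * (1 - a * p) *
        (1 - b * c * a * p ^ 2) + a * p * (1 - c) * (1 - b * p) *
        ((1 - b * p) * (1 - a * (b * c) * p * R⁻¹) /
          ((1 - a * b * p) * (1 - b * c * R⁻¹) * (1 - p * R) ^ 2)))
      = - (a * b * p * R⁻¹ * (1 - c * a * p)) := by
  have e : 1 - b * c * R⁻¹ = (R - b * c) / R := by field_simp
  rw [e]
  generalize hD : R - b * c = D at *
  generalize hE : 1 - p * R = E at *
  generalize hF : 1 - a * b * p = F at *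
  field_simp
  subst hD hE hF
  ring

lemma RR_rec1_term {p : ℂ} (hp : Good p) (l n j k r : ℕ) (hr : r < n + j + 1) (hrL : r < j + l) :
    ph p k (r + 1) * (ww p (j + l) n j (r + 1) * ((1 - p ^ (n + j + 1) * (p ^ k)⁻¹) *
      (1 - p ^ (n + j + k + 2))) * (1 - p ^ (l + n + 1))
      - (1 - p ^ (n + j + 1)) * (ww p (j + l) (n + 1) j (r + 1) * (1 - p ^ (n + 1)) *
        (1 - p ^ (j + l + n + 2)) + p ^ (n + 1) * (1 - p ^ l) * (1 - p ^ (j + 1)) *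
        ww p (j + l) n (j + 1) (r + 1)))
     = ph p k (r + 2) * (p ^ (n + j + 1) * p⁻¹ ^ (r + 1) * ww p (j + l) n j (r + 1) * (1 - p ^ (l + n + 1)))
      - ph p k (r + 1) * (p ^ (n + j + 1) * p⁻¹ ^ r * ww p (j + l) n j r * (1 - p ^ (l + n + 1))) := by
  have h0 := hp.1
  have hc := hh_ne hp (a := n + j) (r := r) (by omega)
  have hd := hh_ne hp (a := j + l) (r := r) (by omega)
  have hd' : 1 - p ^ (j + l) * p⁻¹ ^ r ≠ 0 := by
    rw [pow_inv_sub hp (by omega)]; exact hp.2 _ (by omega)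
  have he := qpp_ne hp r
  have he' : 1 - p * p ^ r ≠ 0 := by
    have := hp.2 (r + 1) (by omega)
    rwa [pow_succ'] at this
  have hN1 := hp.2 (n + j + 1) (by omega)
  have i1 : n + 1 + (j + l) + 1 = (n + (j + l) + 1) + 1 := by ring
  have i2 : n + 1 + j = n + j + 1 := by ring
  have i3 : n + (j + 1) = n + j + 1 := by ring
  have W0 : ww p (j + l) n j r = hh p j r * hh p (n + (j + l) + 1) r / (hh p (n + j) r * hh p (j + l) r * qp p p r ^ 2) := rfl
  have W1 : ww p (j + l) (n + 1) j (r + 1) = hh p j r * hh p (n + (j + l) + 1) r / (hh p (n + j) r * hh p (j + l) r * qp p p r ^ 2) * ((1 - p ^ j * p⁻¹ ^ r) * (1 - p ^ (n + (j + l) + 1 + 1)) / ((1 - p ^ (n + j + 1)) * (1 - p ^ (j + l) * p⁻¹ ^ r) * (1 - p * p ^ r) ^ 2)) := by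
    rw [ww, i1, i2, hh_succ' hp, hh_succ' hp, hh_succ, hh_succ, qp_succ]
    generalize p⁻¹ ^ r = X at *
    field_simp
  have W2 : ww p (j + l) n (j + 1) (r + 1) = hh p j r * hh p (n + (j + l) + 1) r / (hh p (n + j) r * hh p (j + l) r * qp p p r ^ 2) * ((1 - p ^ (j + 1)) * (1 - p ^ (n + (j + l) + 1) * p⁻¹ ^ r) / ((1 - p ^ (n + j + 1)) * (1 - p ^ (j + l) * p⁻¹ ^ r) * (1 - p * p ^ r) ^ 2)) := by
    rw [ww, i3, hh_succ' hp j, hh_succ' hp (n + j), hh_succ, hh_succ, qp_succ]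
    generalize p⁻¹ ^ r = X at *
    field_simp
  have W3 : (1 - p ^ (n + j) * p⁻¹ ^ r) * ww p (j + l) n j (r + 1) = hh p j r * hh p (n + (j + l) + 1) r / (hh p (n + j) r * hh p (j + l) r * qp p p r ^ 2) * ((1 - p ^ j * p⁻¹ ^ r) * (1 - p ^ (n + (j + l) + 1) * p⁻¹ ^ r) / ((1 - p ^ (j + l) * p⁻¹ ^ r) * (1 - p * p ^ r) ^ 2)) := by
    by_cases hX : 1 - p ^ (n + j) * p⁻¹ ^ r = 0
    · have : r = n + j := by
        by_contra hne
        rw [pow_inv_sub hp (by omega)] at hX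
        exact hp.2 _ (by omega) hX
      have hz : hh p j (r + 1) = 0 := hh_eq_zero hp (by omega)
      rw [hh_succ] at hz
      rw [hX]
      rcases mul_eq_zero.1 hz with h | h <;> simp only [h, zero_mul, mul_zero, zero_div]
    · rw [ww, hh_succ, hh_succ, hh_succ, hh_succ, qp_succ]
      generalize p⁻¹ ^ r = X at *
      field_simp
  rw [← W0] at W1 W2 W3
  rw [ph_succ p k (r + 1), W1, W2]
  have hk : p ^ k ≠ 0 := by positivity
  have hrr : p ^ r ≠ 0 := by positivity
  have key : (1 - p ^ (n + j + 1) * (p ^ k)⁻¹) * (1 - p ^ (n + j + k + 2)) =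
      (1 - p ^ (n + j) * p⁻¹ ^ r) * (1 - p ^ (n + j + r + 3)) + (1 - (p ^ k)⁻¹ * p ^ (r + 1)) * (1 - p ^ (k + 1) * p ^ (r + 1)) * p ^ (n + j + 1) * p⁻¹ ^ (r + 1) := by
    simp only [inv_pow]
    field_simp
    ring
  rw [key]
  have hdL : p ^ r - p ^ (j + l) ≠ 0 := by
    intro h
    apply hd'
    rw [inv_pow]
    field_simp
    simpa using h
  have main : (1 - p ^ (n + j + r + 3)) * (1 - p ^ (l + n + 1)) * ((1 - p ^ j * p⁻¹ ^ r) * (1 - p ^ (n + (j + l) + 1) * p⁻¹ ^ r) / ((1 - p ^ (j + l) * p⁻¹ ^ r) * (1 - p * p ^ r) ^ 2))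
      - (1 - p ^ (n + j + 1)) * (((1 - p ^ j * p⁻¹ ^ r) * (1 - p ^ (n + (j + l) + 1 + 1)) / ((1 - p ^ (n + j + 1)) * (1 - p ^ (j + l) * p⁻¹ ^ r) * (1 - p * p ^ r) ^ 2)) * (1 - p ^ (n + 1)) *
        (1 - p ^ (j + l + n + 2)) + p ^ (n + 1) * (1 - p ^ l) * (1 - p ^ (j + 1)) * ((1 - p ^ (j + 1)) * (1 - p ^ (n + (j + l) + 1) * p⁻¹ ^ r) / ((1 - p ^ (n + j + 1)) * (1 - p ^ (j + l) * p⁻¹ ^ r) * (1 - p * p ^ r) ^ 2)))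
      = - (p ^ (n + j + 1) * p⁻¹ ^ r * (1 - p ^ (l + n + 1))) := by
    have := main_id p (p ^ n) (p ^ j) (p ^ l) (p ^ r) hrr he' (by simpa only [pow_add, pow_one] using hN1) (by simpa only [pow_add, pow_one] using hdL)
    simp only [inv_pow, pow_add, pow_one]
    exact this
  linear_combination (ph p k (r + 1) * (1 - p ^ (n + j + r + 3)) * (1 - p ^ (l + n + 1))) * W3 + ph p k (r + 1) * ww p (j + l) n j r * main

lemma RR_rec1 {p : ℂ} (hp : Good p) (l n j k : ℕ) (hk : k ≤ n + j + 1) (hkL : k ≤ j + l) :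
    RR p (j + l) n j k * ((1 - p ^ (n + j + 1) * (p ^ k)⁻¹) *
      (1 - p ^ (n + j + k + 2))) * (1 - p ^ (l + n + 1))
      = (1 - p ^ (n + j + 1)) * (RR p (j + l) (n + 1) j k * (1 - p ^ (n + 1)) *
        (1 - p ^ (j + l + n + 2)) + p ^ (n + 1) * (1 - p ^ l) * (1 - p ^ (j + 1)) *
        RR p (j + l) n (j + 1) k) := by
  have h0 := hp.1
  obtain ⟨g, g0, g1⟩ : ∃ g : ℕ → ℂ, g 0 = 0 ∧ ∀ s, g (s + 1) = ph p k (s + 1) *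
      (p ^ (n + j + 1) * p⁻¹ ^ s * ww p (j + l) n j s * (1 - p ^ (l + n + 1))) :=
    ⟨fun r => Nat.casesOn r 0 fun s => ph p k (s + 1) *
      (p ^ (n + j + 1) * p⁻¹ ^ s * ww p (j + l) n j s * (1 - p ^ (l + n + 1))), rfl, fun _ => rfl⟩
  have hs := Finset.sum_range_sub g (k + 1)
  have gk : g (k + 1) = 0 := by rw [g1, ph_eq_zero hp]; simp
  rw [g0, gk, sub_zero] at hs
  rw [← sub_eq_zero, ← hs]
  unfold RR
  simp only [Finset.sum_mul, Finset.mul_sum, ← Finset.sum_add_distrib, ← Finset.sum_sub_distrib]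
  refine Finset.sum_congr rfl fun r hr => ?_
  have hr := Finset.mem_range.1 hr
  rcases r with _ | r
  · rw [g0, g1]
    simp only [ph_succ, ww, hh_zero, qp_zero]
    have hk : p ^ k ≠ 0 := by positivity
    simp only [ph, qp_zero]
    field_simp
    simp only [pow_add, pow_one]
    ring
  · have := RR_rec1_term hp l n j k r (by omega) (by omega)
    rw [g1, g1]
    linear_combination this

/-- normalized coefficient -/
def uu (p β : ℂ) (r : ℕ) : ℂ := qp β p r / qp p p r

lemma uu_succ {p : ℂ} (hp : Good p) (β : ℂ) (r : ℕ) :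
    uu p β (r + 1) = uu p β r * (1 - β * p ^ r) / (1 - p ^ (r + 1)) := by
  have h1 := qpp_ne hp r
  have h2 := hp.2 (r + 1) (by omega)
  rw [uu, uu, qp_succ, qp_succ, ← pow_succ']
  field_simp

lemma uu_key {p : ℂ} (hp : Good p) (β : ℂ) (s t : ℕ) :
    (1 - β * p ^ (s + t + 1)) * (uu p β (s + 1) * uu p β t + uu p β s * uu p β (t + 1)) =
      (1 - p ^ (s + t + 2)) * (uu p β (s + 1) * uu p β (t + 1)) +
      (1 - β ^ 2 * p ^ (s + t)) * (uu p β s * uu p β t) := by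
  have h1 := hp.2 (s + 1) (by omega)
  have h2 := hp.2 (t + 1) (by omega)
  rw [uu_succ hp, uu_succ hp]
  field_simp
  ring

/-- Laurent sum -/
def ev (p β z y : ℂ) (n : ℕ) : ℂ :=
  ∑ r ∈ Finset.range (n + 1), uu p β r * uu p β (n - r) * z ^ (n - r) * y ^ r

lemma ev_zero (p β z y : ℂ) : ev p β z y 0 = 1 := by
  simp [ev, uu, qp_zero]

lemma ev_rec {p : ℂ} (hp : Good p) (β z y : ℂ) (hzy : z * y = 1) (M : ℕ) :
    (z + y) * (1 - β * p ^ M) * ev p β z y M = (1 - p ^ (M + 1)) * ev p β z y (M + 1) +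
      (if M = 0 then 0 else (1 - β ^ 2 * p ^ (M - 1)) * ev p β z y (M - 1)) := by
  have A : z * ev p β z y M = uu p β 0 * uu p β M * z ^ (M + 1) +
      ∑ s ∈ Finset.range M, uu p β (s + 1) * uu p β (M - (s + 1)) * z ^ (M - s) * y ^ (s + 1) := by
    rw [ev, Finset.sum_range_succ', mul_add, add_comm, Finset.mul_sum]
    congr 1
    · simp; ring
    · refine Finset.sum_congr rfl fun s hs => ?_
      have := Finset.mem_range.1 hs
      obtain ⟨t, rfl⟩ := Nat.exists_eq_add_of_lt this
      have e : s + t + 1 - (s + 1) = t := by omega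
      have e' : s + t + 1 - s = t + 1 := by omega
      rw [e, e']; ring
  have B : y * ev p β z y M = uu p β 0 * uu p β M * y ^ (M + 1) +
      ∑ s ∈ Finset.range M, uu p β s * uu p β (M - s) * z ^ (M - s) * y ^ (s + 1) := by
    rw [ev, Finset.sum_range_succ, mul_add, add_comm, Finset.mul_sum]
    congr 1
    · simp; ring
    · refine Finset.sum_congr rfl fun s hs => ?_
      ring
  have D : ev p β z y (M + 1) = uu p β 0 * uu p β (M + 1) * z ^ (M + 1) +
      uu p β 0 * uu p β (M + 1) * y ^ (M + 1) +
      ∑ s ∈ Finset.range M, uu p β (s + 1) * uu p β (M - s) * z ^ (M - s) * y ^ (s + 1) := by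
    rw [ev, Finset.sum_range_succ, Finset.sum_range_succ']
    simp only [Nat.add_sub_add_right, Nat.sub_self, Nat.sub_zero, pow_zero]
    ring
  have E : (if M = 0 then 0 else (1 - β ^ 2 * p ^ (M - 1)) * ev p β z y (M - 1)) =
      ∑ s ∈ Finset.range M, (1 - β ^ 2 * p ^ (M - 1)) * (uu p β s * uu p β (M - (s + 1)) * z ^ (M - s) * y ^ (s + 1)) := by
    rcases M with _ | M
    · simp
    · simp only [Nat.add_sub_cancel, Nat.succ_ne_zero, if_false, ev, Finset.mul_sum]
      refine Finset.sum_congr rfl fun s hs => ?_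
      have := Finset.mem_range.1 hs
      obtain ⟨t, rfl⟩ := Nat.exists_eq_add_of_le (Nat.lt_succ_iff.1 this)
      have e : s + t + 1 - (s + 1) = t := by omega
      have e' : s + t + 1 - s = t + 1 := by omega
      have e2 : s + t - s = t := by omega
      rw [e, e', e2, pow_succ, pow_succ]
      linear_combination (-(1 - β ^ 2 * p ^ (s + t)) * (uu p β s * uu p β t * z ^ t * y ^ s)) * hzy
  have F : ∑ s ∈ Finset.range M, (1 - β * p ^ M) * (uu p β (s + 1) * uu p β (M - (s + 1)) * z ^ (M - s) * y ^ (s + 1))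
      + ∑ s ∈ Finset.range M, (1 - β * p ^ M) * (uu p β s * uu p β (M - s) * z ^ (M - s) * y ^ (s + 1))
      = ∑ s ∈ Finset.range M, (1 - p ^ (M + 1)) * (uu p β (s + 1) * uu p β (M - s) * z ^ (M - s) * y ^ (s + 1))
      + ∑ s ∈ Finset.range M, (1 - β ^ 2 * p ^ (M - 1)) * (uu p β s * uu p β (M - (s + 1)) * z ^ (M - s) * y ^ (s + 1)) := by
    rw [← Finset.sum_add_distrib, ← Finset.sum_add_distrib]
    refine Finset.sum_congr rfl fun s hs => ?_
    have := Finset.mem_range.1 hs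
    obtain ⟨t, rfl⟩ := Nat.exists_eq_add_of_lt this
    have e : s + t + 1 - (s + 1) = t := by omega
    have e' : s + t + 1 - s = t + 1 := by omega
    rw [e, e', Nat.add_sub_cancel]
    linear_combination (z ^ (t + 1) * y ^ (s + 1)) * uu_key hp β s t
  have G : (1 - p ^ (M + 1)) * uu p β (M + 1) = uu p β M * (1 - β * p ^ M) := by
    have h2 := hp.2 (M + 1) (by omega)
    rw [uu_succ hp]; field_simp
  rw [E, D]
  simp only [← Finset.mul_sum] at F ⊢
  linear_combination (1 - β * p ^ M) * A + (1 - β * p ^ M) * B + F -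
    uu p β 0 * (z ^ (M + 1) + y ^ (M + 1)) * G

lemma ultra_eval {C : ℂ → ℂ → ℕ → Polynomial ℂ} (hC : IsUltra C) (x : ℂ) :
    ∃ z y : ℂ, z * y = 1 ∧ z + y = 2 * x ∧ ∀ p β n, (C p β n).eval x = ev p β z y n := by
  obtain ⟨s, hs⟩ := IsAlgClosed.exists_eq_mul_self (x ^ 2 - 1)
  have h1 : (x + s) * (x - s) = 1 := by linear_combination hs
  have hz : x + s ≠ 0 := left_ne_zero_of_mul_eq_one h1
  have hy : (x + s)⁻¹ = x - s := inv_eq_of_mul_eq_one_right h1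
  refine ⟨x + s, x - s, h1, by ring, fun p β n => ?_⟩
  have := (hC p β n).2 (x + s) hz
  rw [hy] at this
  rw [show (x + s + (x - s)) / 2 = x by ring] at this
  rw [this, ev]
  refine Finset.sum_congr rfl fun r hr => ?_
  have hr := Finset.mem_range.1 hr
  rw [← hy, uu, uu, inv_pow, mul_assoc (_ / _ * (_ / _)), ← div_eq_mul_inv, ← zpow_natCast, ← zpow_natCast, ← zpow_sub₀ hz, div_mul_div_comm]
  congr 2
  omega

lemma ultra_zero {C : ℂ → ℂ → ℕ → Polynomial ℂ} (hC : IsUltra C) (x p β : ℂ) :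
    (C p β 0).eval x = 1 := by
  obtain ⟨z, y, h1, h2, h⟩ := ultra_eval hC x
  rw [h, ev_zero]

lemma ultra_rec {C : ℂ → ℂ → ℕ → Polynomial ℂ} (hC : IsUltra C) {p : ℂ} (hp : Good p) (x β : ℂ)
    (M : ℕ) : 2 * x * (1 - β * p ^ M) * (C p β M).eval x = (1 - p ^ (M + 1)) * (C p β (M + 1)).eval x +
      (if M = 0 then 0 else (1 - β ^ 2 * p ^ (M - 1)) * (C p β (M - 1)).eval x) := by
  obtain ⟨z, y, h1, h2, h⟩ := ultra_eval hC x
  rw [h, h, h, ← h2]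
  exact ev_rec hp β z y h1 M

/-- normalized ultraspherical polynomials -/
def cc (C : ℂ → ℂ → ℕ → Polynomial ℂ) (p x : ℂ) (N k : ℕ) : ℂ :=
  if k ≤ N then qp p p N / qp p p (N + k + 1) * (C p (p ^ (k + 1)) (N - k)).eval x else 0

/-- normalized ultraspherical polynomials -/
def dd (C : ℂ → ℂ → ℕ → Polynomial ℂ) (q p x : ℂ) (i k : ℕ) : ℂ :=
  if i ≤ k then (p ^ (k * i))⁻¹ * (q ^ i)⁻¹ * qp p p (k + i) / qp p p i *
    (C p ((p ^ k)⁻¹) (k - i)).eval x else 0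

lemma cc_rec {C : ℂ → ℂ → ℕ → Polynomial ℂ} (hC : IsUltra C) {p : ℂ} (hp : Good p) (x : ℂ)
    (N k : ℕ) : (1 - p ^ (N + 1) * (p ^ k)⁻¹) * (1 - p ^ (N + k + 2)) * cc C p x (N + 1) k =
      2 * x * (1 - p ^ (N + 1)) ^ 2 * cc C p x N k -
      (1 - p ^ N) * (1 - p ^ (N + 1)) * cc C p x (N - 1) k := by
  have h0 := hp.1
  by_cases h1 : k ≤ N
  · obtain ⟨m, rfl⟩ := Nat.exists_eq_add_of_le h1
    have hr := ultra_rec hC hp x (p ^ (k + 1)) m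
    have e1 : k + m + 1 - k = m + 1 := by omega
    have e2 : k + m - k = m := by omega
    have q1 := qpp_ne hp (k + m + k + 1)
    have q2 := qpp_ne hp (k + m)
    have q3 := hp.2 (k + m + 1) (by omega)
    have q4 := hp.2 (k + m + k + 2) (by omega)
    have q5 : p ^ (k + m + 1) * (p ^ k)⁻¹ = p ^ (m + 1) := by field_simp; ring
    have c1 : (1 - p ^ (k + m + k + 2)) * cc C p x (k + m + 1) k = qp p p (k + m) / qp p p (k + m + k + 1) * (1 - p ^ (k + m + 1)) * (C p (p ^ (k + 1)) (m + 1)).eval x := by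
      rw [cc, if_pos (by omega), e1, qp_succ, show k + m + 1 + k + 1 = (k + m + k + 1) + 1 by ring, qp_succ, ← pow_succ', ← pow_succ']
      field_simp
    have c2 : cc C p x (k + m) k = qp p p (k + m) / qp p p (k + m + k + 1) * (C p (p ^ (k + 1)) m).eval x := by
      rw [cc, if_pos (by omega), e2]
    rw [q5, mul_assoc (1 - p ^ (m + 1)), c1, c2]
    rcases m with _ | m
    · have : (1 - p ^ (k + 0)) * cc C p x (k + 0 - 1) k = 0 := by
        rcases k with _ | k
        · simp
        · rw [cc, if_neg (by omega), mul_zero]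
      rw [if_pos rfl] at hr
      linear_combination - (1 - p ^ (k + 0 + 1)) * (qp p p (k + 0) / qp p p (k + 0 + k + 1)) * hr
         + (1 - p ^ (k + 0 + 1)) * this
    · rw [if_neg (by omega)] at hr
      have q6 := hp.2 (k + m + k + 2) (by omega)
      have q7 := qpp_ne hp (k + m + k + 1)
      have c3 : (1 - p ^ (k + m + 1)) * cc C p x (k + m) k = qp p p (k + (m + 1)) / qp p p (k + (m + 1) + k + 1) * (1 - p ^ (k + m + k + 2)) * (C p (p ^ (k + 1)) m).eval x := by
        rw [cc, if_pos (by omega), show k + m - k = m by omega, show k + (m + 1) = k + m + 1 by ring, show k + m + 1 + k + 1 = (k + m + k + 1) + 1 by ring, qp_succ p p (k + m), qp_succ p p (k + m + k + 1), ← pow_succ', ← pow_succ']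
        field_simp
      rw [show k + (m + 1) - 1 = k + m by omega]
      rw [Nat.add_sub_cancel] at hr
      rw [show k + (m + 1) = k + m + 1 by ring] at *
      linear_combination - (1 - p ^ (k + m + 1 + 1)) * (qp p p (k + m + 1) / qp p p (k + m + 1 + k + 1)) * hr
         + (1 - p ^ (k + m + 1 + 1)) * c3
  · have z1 : cc C p x N k = 0 := by rw [cc, if_neg h1]
    have z2 : cc C p x (N - 1) k = 0 := by rw [cc, if_neg (by omega)]
    rw [z1, z2]
    by_cases h2 : k = N + 1
    · subst h2
      rw [mul_inv_cancel₀ (pow_ne_zero _ h0)]; simp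
    · rw [cc, if_neg (by omega)]; simp

lemma dd_rec {C : ℂ → ℂ → ℕ → Polynomial ℂ} (hC : IsUltra C) {q p : ℂ} (hp : Good p) (hq : q ^ 2 = p)
    (x : ℂ) (i k : ℕ) : ((p ^ k)⁻¹ + p ^ (k + 1) - (p ^ i)⁻¹ - p ^ (i + 1)) * dd C q p x i k =
      -2 * x * q * (p ^ (i + 1))⁻¹ * (1 - p ^ (i + 1)) ^ 2 * dd C q p x (i + 1) k +
      (p ^ (i + 1))⁻¹ * (1 - p ^ (i + 1)) * (1 - p ^ (i + 2)) * dd C q p x (i + 2) k := by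
  have h0 := hp.1
  have hq0 : q ≠ 0 := by rintro rfl; simp at hq; exact h0 hq.symm
  by_cases h1 : i + 1 ≤ k
  · obtain ⟨m, rfl⟩ := Nat.exists_eq_add_of_le h1
    have hr := ultra_rec hC hp x ((p ^ (i + 1 + m))⁻¹) m
    have d0 : dd C q p x i (i + 1 + m) = (p ^ ((i + 1 + m) * i))⁻¹ * (q ^ i)⁻¹ * qp p p (i + 1 + m + i) / qp p p i *
       (C p ((p ^ (i + 1 + m))⁻¹) (m + 1)).eval x := by
      rw [dd, if_pos (by omega), show i + 1 + m - i = m + 1 by omega]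
    have d1 : dd C q p x (i + 1) (i + 1 + m) = (p ^ ((i + 1 + m) * (i + 1)))⁻¹ * (q ^ (i + 1))⁻¹ * qp p p (i + 1 + m + i + 1) / qp p p (i + 1) *
       (C p ((p ^ (i + 1 + m))⁻¹) m).eval x := by
      rw [dd, if_pos (by omega), show i + 1 + m - (i + 1) = m by omega]; rfl
    have q0 := qpp_ne hp i
    have q1 := hp.2 (i + 1) (by omega)
    have q2 := hp.2 (i + 2) (by omega)
    generalize hE0 : (C p ((p ^ (i + 1 + m))⁻¹) m).eval x = E0 at *
    generalize hE1 : (C p ((p ^ (i + 1 + m))⁻¹) (m + 1)).eval x = E1 at *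
    rcases m with _ | m
    · have d2 : dd C q p x (i + 2) (i + 1 + 0) = 0 := by rw [dd, if_neg (by omega)]
      rw [if_pos rfl] at hr
      rw [d0, d1, d2, qp_succ p p i, qp_succ, ← pow_succ', ← pow_succ']
      simp only [mul_zero, add_zero, zero_add, pow_zero, mul_one, pow_one] at *
      have hr' : (1 - p) * E1 = 2 * x * (1 - (p ^ (i + 1))⁻¹) * E0 := hr.symm
      have : E1 = 2 * x * (1 - (p ^ (i + 1))⁻¹) * E0 / (1 - p) := by
        have := hp.2 1 (by omega)
        rw [pow_one] at this
        field_simp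
        field_simp at hr'
        linear_combination hr'
      rw [this]
      have := hp.2 1 (by omega)
      rw [pow_one] at this
      field_simp
      ring
    · rw [if_neg (by omega), Nat.add_sub_cancel] at hr
      have d2 : dd C q p x (i + 2) (i + 1 + (m + 1)) = (p ^ ((i + 1 + (m + 1)) * (i + 2)))⁻¹ * (q ^ (i + 2))⁻¹ * qp p p (i + 1 + (m + 1) + i + 1 + 1) / qp p p (i + 1 + 1) *
         (C p ((p ^ (i + 1 + (m + 1)))⁻¹) m).eval x := by
        rw [dd, if_pos (by omega), show i + 1 + (m + 1) - (i + 2) = m by omega]; rfl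
      generalize (C p ((p ^ (i + 1 + (m + 1)))⁻¹) m).eval x = E2 at *
      have hm := hp.2 (m + 2) (by omega)
      have : E1 = (2 * x * (1 - (p ^ (i + 1 + (m + 1)))⁻¹ * p ^ (m + 1)) * E0 - (1 - ((p ^ (i + 1 + (m + 1)))⁻¹) ^ 2 * p ^ m) * E2) / (1 - p ^ (m + 2)) := by
        rw [hr]; field_simp; ring
      rw [d0, d1, d2, qp_succ p p (i + 1), qp_succ p p i, qp_succ p p (i + 1 + (m + 1) + i + 1), qp_succ p p (i + 1 + (m + 1) + i), ← pow_succ', ← pow_succ', ← pow_succ', ← pow_succ', this, show i + 1 + 1 = i + 2 by ring]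
      have hq2 : q ^ (i + 2) = q ^ i * p := by rw [pow_add, hq]
      rw [hq2]
      field_simp
      ring
  · have z1 : dd C q p x (i + 1) k = 0 := by rw [dd, if_neg h1]
    have z2 : dd C q p x (i + 2) k = 0 := by rw [dd, if_neg (by omega)]
    rw [z1, z2]
    by_cases h2 : i = k
    · subst h2
      ring
    · rw [dd, if_neg (by omega)]; simp

/-- the pairing -/
def SS (C : ℂ → ℂ → ℕ → Polynomial ℂ) (q p x : ℂ) (L j i : ℕ) : ℂ :=
  ∑ k ∈ Finset.range (L + 1), p ^ (k * k) * (1 - p ^ (2 * k + 1)) * dd C q p x i k * cc C p x j k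

lemma SS_rec {C : ℂ → ℂ → ℕ → Polynomial ℂ} (hC : IsUltra C) {q p : ℂ} (hp : Good p) (hq : q ^ 2 = p)
    (x : ℂ) (L j i : ℕ) :
    ((p ^ (j + 1))⁻¹ + p ^ (j + 2) - (p ^ i)⁻¹ - p ^ (i + 1)) * SS C q p x L (j + 1) i =
      (p ^ (j + 1))⁻¹ * (2 * x * (1 - p ^ (j + 1)) ^ 2 * SS C q p x L j i -
      (1 - p ^ j) * (1 - p ^ (j + 1)) * SS C q p x L (j - 1) i) +
      (-2 * x * q * (p ^ (i + 1))⁻¹ * (1 - p ^ (i + 1)) ^ 2 * SS C q p x L (j + 1) (i + 1) +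
      (p ^ (i + 1))⁻¹ * (1 - p ^ (i + 1)) * (1 - p ^ (i + 2)) * SS C q p x L (j + 1) (i + 2)) := by
  have h0 := hp.1
  unfold SS
  simp only [Finset.mul_sum, ← Finset.sum_add_distrib, ← Finset.sum_sub_distrib]
  refine Finset.sum_congr rfl fun k _ => ?_
  have h1 := cc_rec hC hp x j k
  have h2 := dd_rec hC hp hq x i k
  have e : (1 - p ^ (j + 1) * (p ^ k)⁻¹) * (1 - p ^ (j + k + 2)) =
    p ^ (j + 1) * ((p ^ (j + 1))⁻¹ + p ^ (j + 2) - ((p ^ k)⁻¹ + p ^ (k + 1))) := by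
    field_simp; ring
  have h1' : ((p ^ (j + 1))⁻¹ + p ^ (j + 2) - ((p ^ k)⁻¹ + p ^ (k + 1))) * cc C p x (j + 1) k =
     (p ^ (j + 1))⁻¹ * (2 * x * (1 - p ^ (j + 1)) ^ 2 * cc C p x j k -
      (1 - p ^ j) * (1 - p ^ (j + 1)) * cc C p x (j - 1) k) := by
    rw [← h1, e, ← mul_assoc, ← mul_assoc, inv_mul_cancel₀ (pow_ne_zero _ h0), one_mul]
  linear_combination (p ^ (k * k) * (1 - p ^ (2 * k + 1)) * dd C q p x i k) * h1' +
    (p ^ (k * k) * (1 - p ^ (2 * k + 1)) * cc C p x (j + 1) k) * h2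

lemma SS_eq {C : ℂ → ℂ → ℕ → Polynomial ℂ} (hC : IsUltra C) {q p : ℂ} (hp : Good p) (hq : q ^ 2 = p)
    (x : ℂ) (L d : ℕ) : ∀ i j, j ≤ L → j ≤ i + d →
    SS C q p x L j i = if j = i then (q ^ j)⁻¹ else 0 := by
  have h0 := hp.1
  have hq0 : q ≠ 0 := by rintro rfl; simp at hq; exact h0 hq.symm
  induction d with
  | zero =>
    intro i j hj hij
    by_cases h : j = i
    · subst h
      rw [if_pos rfl, SS, Finset.sum_eq_single j]
      · rw [dd, cc, if_pos le_rfl, if_pos le_rfl, Nat.sub_self, ultra_zero hC, ultra_zero hC, qp_succ, ← pow_succ']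
        have q1 := qpp_ne hp j
        have q2 := qpp_ne hp (j + j)
        have q3 := hp.2 (j + j + 1) (by omega)
        rw [← two_mul] at *
        field_simp
      · intro k _ hk
        rcases Nat.lt_or_gt_of_ne hk with h | h
        · rw [dd, if_neg (by omega)]; ring
        · rw [cc, if_neg (by omega)]; ring
      · intro h; exact absurd (Finset.mem_range.2 (by omega)) h
    · rw [if_neg h]
      refine Finset.sum_eq_zero fun k _ => ?_
      by_cases h : i ≤ k
      · rw [cc, if_neg (by omega)]; ring
      · rw [dd, if_neg h]; ring
  | succ d ih =>
    intro i j hj hij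
    by_cases h : j ≤ i + d
    · exact ih i j hj h
    have : j = i + d + 1 := by omega
    subst this
    have hr := SS_rec hC hp hq x L (i + d) i
    rw [ih i (i + d) (by omega) (by omega), ih i (i + d - 1) (by omega) (by omega),
      ih (i + 1) (i + d + 1) (by omega) (by omega), ih (i + 2) (i + d + 1) (by omega) (by omega)] at hr
    rw [if_neg (by omega)]
    have hne : (p ^ (i + d + 1))⁻¹ + p ^ (i + d + 2) - (p ^ i)⁻¹ - p ^ (i + 1) ≠ 0 := by
      have a1 := hp.2 (d + 1) (by omega)
      have a2 := hp.2 (2 * i + d + 2) (by omega)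
      have : (p ^ (i + d + 1))⁻¹ + p ^ (i + d + 2) - (p ^ i)⁻¹ - p ^ (i + 1) =
        (p ^ (i + d + 1))⁻¹ * ((1 - p ^ (d + 1)) * (1 - p ^ (2 * i + d + 2))) := by
        field_simp; ring
      rw [this]; positivity
    apply (mul_eq_zero.1 (hr.trans _)).resolve_left hne
    rcases d with _ | _ | d
    · have : (1 - p ^ i) * (if i - 1 = i then (q ^ (i - 1))⁻¹ else 0) = 0 := by
        rcases i with _ | i
        · simp
        · simp
      simp only [add_zero, if_true, if_neg (show ¬ (i + 1 = i + 2) by omega)]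
      generalize (if i - 1 = i then (q ^ (i - 1))⁻¹ else 0) = T at *
      rw [pow_succ q]
      field_simp
      linear_combination  (-(1 - p ^ (i + 1)) * q ^ i) * this
    · rw [if_neg (by omega), if_pos (by omega), if_neg (by omega), if_pos (by omega)]
      simp only [zero_add, Nat.add_sub_cancel]
      have hq2 : q ^ (i + 2) = q ^ i * p := by rw [pow_add, hq]
      rw [show i + 1 + 1 = i + 2 by ring, hq2]
      field_simp
      ring
    · rw [if_neg (by omega), if_neg (by omega), if_neg (by omega), if_neg (by omega)]
      ring

/-- Saalschuetz weight -/
def vv (p : ℂ) (L r : ℕ) : ℂ := (1 - p ^ (L + 1)) / ((1 - p ^ (L + 1) * p⁻¹ ^ r) * qp p p r ^ 2)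

/-- Saalschuetz sum -/
def VV (p : ℂ) (L k : ℕ) : ℂ := ∑ r ∈ Finset.range (k + 1), ph p k r * vv p L r

lemma ww_zero {p : ℂ} (hp : Good p) {L j r : ℕ} (h1 : r ≤ j) (h2 : r ≤ L) :
    ww p L 0 j r = vv p L r := by
  have a1 := hh_ne hp h1
  have a2 := hh_ne hp h2
  have a3 := qpp_ne hp r
  have a4 : 1 - p ^ (L + 1) * p⁻¹ ^ r ≠ 0 := by
    rw [pow_inv_sub hp (by omega)]; exact hp.2 _ (by omega)
  have s := hh_shift hp (L + 1) r
  rw [Nat.add_sub_cancel] at s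
  rw [ww, vv, zero_add, zero_add]
  generalize 1 - p ^ (L + 1) * p⁻¹ ^ r = X at *
  field_simp
  linear_combination -s

lemma RR_VV {p : ℂ} (hp : Good p) {L j k : ℕ} (h1 : k ≤ j) (h2 : k ≤ L) :
    RR p L 0 j k = VV p L k := by
  refine Finset.sum_congr rfl fun r hr => ?_
  have := Finset.mem_range.1 hr
  rw [ww_zero hp (by omega) (by omega)]

lemma VV_step {p : ℂ} (hp : Good p) {L k : ℕ} (hk : k ≤ L) :
    (1 - p ^ (L + 1) * (p ^ k)⁻¹) * (1 - p ^ (L + k + 2)) * VV p L k =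
      (1 - p ^ (L + 1)) * (1 - p ^ (L + 2)) * VV p (L + 1) k := by
  have h0 := hp.1
  obtain ⟨g, g0, g1⟩ : ∃ g : ℕ → ℂ, g 0 = 0 ∧ ∀ s, g (s + 1) = ph p k (s + 1) *
      (p ^ (L + 1) * p⁻¹ ^ s * vv p L s) :=
    ⟨fun r => Nat.casesOn r 0 fun s => ph p k (s + 1) *
      (p ^ (L + 1) * p⁻¹ ^ s * vv p L s), rfl, fun _ => rfl⟩
  have hs := Finset.sum_range_sub g (k + 1)
  have gk : g (k + 1) = 0 := by rw [g1, ph_eq_zero hp]; simp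
  rw [g0, gk, sub_zero] at hs
  rw [← sub_eq_zero, ← hs]
  unfold VV
  simp only [Finset.mul_sum, ← Finset.sum_sub_distrib]
  refine Finset.sum_congr rfl fun r hr => ?_
  have hr := Finset.mem_range.1 hr
  have hk0 : p ^ k ≠ 0 := by positivity
  have key : (1 - p ^ (L + 1) * (p ^ k)⁻¹) * (1 - p ^ (L + k + 2)) =
      (1 - p ^ (L + 1) * p⁻¹ ^ r) * (1 - p ^ (L + r + 2)) + (1 - (p ^ k)⁻¹ * p ^ r) * (1 - p ^ (k + 1) * p ^ r) * p ^ (L + 1) * p⁻¹ ^ r := by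
    simp only [inv_pow]
    field_simp
    ring
  rw [key]
  have b1 := hp.2 (L + 1) (by omega)
  have b2 := hp.2 (L + 2) (by omega)
  rcases r with _ | r
  · rw [g0, g1]
    simp only [ph_succ, vv, qp_zero, pow_zero, mul_one, add_zero]
    field_simp
    ring
  · have a4 : p ^ (r + 1) - p ^ (L + 1) ≠ 0 := by
      have := hp.2 (L - r) (by omega)
      obtain ⟨c, rfl⟩ := Nat.exists_eq_add_of_le (show r ≤ L by omega)
      rw [Nat.add_sub_cancel_left] at this
      have e : p ^ (r + 1) - p ^ (r + c + 1) = p ^ (r + 1) * (1 - p ^ c) := by ring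
      rw [e]; positivity
    have a5 : p ^ r - p ^ (L + 1) ≠ 0 := by
      have := hp.2 (L - r + 1) (by omega)
      obtain ⟨c, rfl⟩ := Nat.exists_eq_add_of_le (show r ≤ L by omega)
      rw [Nat.add_sub_cancel_left] at this
      have e : p ^ r - p ^ (r + c + 1) = p ^ r * (1 - p ^ (c + 1)) := by ring
      rw [e]; positivity
    have a3 := qpp_ne hp r
    have a6 := hp.2 (r + 1) (by omega)
    have T : (1 - p ^ (L + 1)) * (1 - p ^ (L + 2)) * vv p (L + 1) (r + 1) -
        (1 - p ^ (L + 1) * p⁻¹ ^ (r + 1)) * (1 - p ^ (L + (r + 1) + 2)) * vv p L (r + 1) =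
        p ^ (L + 1) * p⁻¹ ^ r * vv p L r := by
      simp only [vv, qp_succ, ← pow_succ']
      have f1 : 1 - p ^ (L + 1) * p⁻¹ ^ (r + 1) = (p ^ (r + 1) - p ^ (L + 1)) / p ^ (r + 1) := by
        simp only [inv_pow]; field_simp
      have f2 : 1 - p ^ (L + 1) * p⁻¹ ^ r = (p ^ r - p ^ (L + 1)) / p ^ r := by
        simp only [inv_pow]; field_simp
      have f3 : 1 - p ^ (L + 1 + 1) * p⁻¹ ^ (r + 1) = (p ^ r - p ^ (L + 1)) / p ^ r := by
        simp only [inv_pow]; field_simp; ring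
      rw [f1, f2, f3]
      simp only [inv_pow]
      generalize hX : p ^ (r + 1) - p ^ (L + 1) = X at *
      generalize hY : p ^ r - p ^ (L + 1) = Y at *
      generalize hZ : 1 - p ^ (r + 1) = Z at *
      field_simp
      subst hZ hY
      ring
    rw [g1, g1, ph_succ p k (r + 1)]
    linear_combination -ph p k (r + 1) * T

lemma VV_base_aux {p : ℂ} (hp : Good p) (k M : ℕ) (hM : M ≤ k) :
    (1 - p ^ (k + 1)) * ∑ r ∈ Finset.range M, ph p k r * vv p k r =
      - (p ^ (k + 1) * p⁻¹ ^ M * ph p k M * (1 - p ^ M) ^ 2 /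
        ((1 - p ^ (k + 1) * p⁻¹ ^ M) * qp p p M ^ 2)) := by
  have h0 := hp.1
  induction M with
  | zero => simp
  | succ M ih =>
    rw [Finset.sum_range_succ, mul_add, ih (by omega), ph_succ, vv, qp_succ, ← pow_succ']
    obtain ⟨c, rfl⟩ := Nat.exists_eq_add_of_le hM
    have f1 : p ^ (M + 1 + c + 1) * p⁻¹ ^ (M + 1) = p ^ (c + 1) := by
      simp only [inv_pow]; field_simp; ring
    have f2 : p ^ (M + 1 + c + 1) * p⁻¹ ^ M = p ^ (c + 2) := by
      simp only [inv_pow]; field_simp; ring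
    rw [f1, f2]
    have b1 := hp.2 (c + 1) (by omega)
    have b2 := hp.2 (c + 2) (by omega)
    have b3 := hp.2 (M + 1) (by omega)
    have b4 := qpp_ne hp M
    generalize ph p _ M = f
    generalize hX : 1 - p ^ (c + 1) = X at *
    generalize hY : 1 - p ^ (c + 2) = Y at *
    field_simp
    subst hX hY
    ring

lemma VV_base {p : ℂ} (hp : Good p) (k : ℕ) :
    (1 - p ^ (k + 1)) * VV p k k * qp p p k ^ 2 = ph p k k * (1 - p ^ (2 * k + 1)) := by
  have h0 := hp.1
  have h := VV_base_aux hp k k le_rfl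
  rw [VV, Finset.sum_range_succ, mul_add, h, vv]
  have f1 : p ^ (k + 1) * p⁻¹ ^ k = p := by
      simp only [inv_pow]; field_simp; ring
  have b1 := hp.2 1 (by omega)
  rw [pow_one] at b1
  have b4 := qpp_ne hp k
  rw [f1]
  field_simp
  ring

lemma saal {p : ℂ} (hp : Good p) (k d : ℕ) :
    VV p (k + d) k * hh p (k + d) k = ee p k * (p ^ (k * k))⁻¹ * qp (p ^ (k + d + 2)) p k := by
  have h0 := hp.1
  induction d with
  | zero =>
    have h := VV_base hp k
    have h1 := hh_mul 0 k hp
    rw [zero_add, qp_zero, mul_one] at h1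
    rw [ph, qp_neg hp, h1] at h
    have b1 := hp.2 (k + 1) (by omega)
    have b4 := qpp_ne hp k
    rw [add_zero, h1]
    have s1 := qp_succ (p ^ (k + 1)) p k
    have s2 := qp_succ' (p ^ (k + 1)) p k
    rw [← pow_succ] at s2
    rw [s2, ← pow_add] at s1
    apply mul_left_cancel₀ (mul_ne_zero b1 b4)
    rw [inv_pow, ← pow_mul] at h
    rw [show k + 1 + k = 2 * k + 1 by ring] at s1
    linear_combination h - ee p k * (p ^ (k * k))⁻¹ * qp p p k * s1
  | succ d ih =>
    have h := VV_step hp (L := k + d) (k := k) (by omega)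
    have s := hh_shift hp (k + d + 1) k
    rw [Nat.add_sub_cancel, inv_pow] at s
    have b1 := hp.2 (k + d + 1) (by omega)
    have b2 := hp.2 (k + d + 2) (by omega)
    have b3 : 1 - p ^ (k + d + 1) * (p ^ k)⁻¹ ≠ 0 := by
      rw [← inv_pow, pow_inv_sub hp (by omega)]; exact hp.2 _ (by omega)
    have s1 := qp_succ (p ^ (k + d + 2)) p k
    have s2 := qp_succ' (p ^ (k + d + 2)) p k
    rw [← pow_succ] at s2
    rw [s2, ← pow_add] at s1
    rw [show k + (d + 1) = k + d + 1 by ring, show k + d + 1 + 2 = k + d + 2 + 1 by ring]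
    rw [show k + d + 2 + k = k + d + k + 2 by ring] at s1
    apply mul_left_cancel₀ (mul_ne_zero b1 b2)
    linear_combination (1 - p ^ (k + d + k + 2)) * (1 - p ^ (k + d + 1)) * ih - hh p (k + d + 1) k * h - (1 - p ^ (k + d + k + 2)) * VV p (k + d) k * s - ee p k * (p ^ (k * k))⁻¹ * (1 - p ^ (k + d + 1)) * s1

lemma good_of {q : ℝ} (hq0 : 0 < q) (hq1 : q < 1) : Good ((q : ℂ) ^ 2) := by
  refine ⟨by simp [hq0.ne'], fun m hm h => ?_⟩
  have h1 : q ^ (2 * m) < 1 := pow_lt_one₀ hq0.le hq1 (by omega)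
  rw [← pow_mul, sub_eq_zero] at h
  have : (1 : ℝ) = q ^ (2 * m) := by exact_mod_cast h
  linarith

/-- coefficient kernel -/
def KK (C : ℂ → ℂ → ℕ → Polynomial ℂ) (q : ℂ) (L : ℕ) (x : ℂ) (i k : ℕ) : ℂ :=
  (-1) ^ k * ee (q ^ 2) k ^ 2 * q ^ (k * k + 3 * k) * (1 - (q ^ 2) ^ (2 * k + 1)) *
    hh (q ^ 2) L k / qp ((q ^ 2) ^ (L + 2)) (q ^ 2) k * dd C q (q ^ 2) x i k

lemma term_alg (A B X Y Z y1 y2 y3 y4 y5 y6 y7 y8 y9 y10 y11 y12 y13 R c1 c2 : ℂ)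
    (a1 : y6 ≠ 0) (a2 : y7 ≠ 0) (a3 : y8 ≠ 0) (a4 : Y ≠ 0) (a5 : Z ≠ 0) (a6 : X ≠ 0) (a7 : A ≠ 0)
    (a8 : B ≠ 0) (b1 : y1 ≠ 0) (b2 : y2 ≠ 0) :
    y5 * (y3 * y4 * B * A * (y1 * y2)⁻¹) * (y6 * y9 / (y7 * y8)) *
      (y11 * A⁻¹ * y12 * (y11 * B⁻¹ * y13) / (y6 * Y)) * (y10 / Z) * R * (c1 * c2) =
    y5 * y11 ^ 2 * y4 * X * y12 / Y * (y1⁻¹ * y2⁻¹ * y9 / y8 * c1) *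
      (y3 * (y13 * y10 / (y7 * X * Z) * c2) * R) := by
  have h1 := mul_inv_cancel₀ a7
  have h2 := mul_inv_cancel₀ a8
  have h3 := mul_inv_cancel₀ a1
  have h4 := mul_inv_cancel₀ a6
  simp only [div_eq_mul_inv, mul_inv]
  trans (y5 * y3 * y4 * y9 * y11 ^ 2 * y12 * y13 * y10 * R * c1 * c2 * y1⁻¹ * y2⁻¹ * y7⁻¹ * y8⁻¹ * Y⁻¹ * Z⁻¹) *
     (A * A⁻¹) * (B * B⁻¹) * (y6 * y6⁻¹)
  · ring
  rw [h1, h2, h3]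
  trans (y5 * y3 * y4 * y9 * y11 ^ 2 * y12 * y13 * y10 * R * c1 * c2 * y1⁻¹ * y2⁻¹ * y7⁻¹ * y8⁻¹ * Y⁻¹ * Z⁻¹) *
     (X * X⁻¹)
  · rw [h4]; ring
  ring

lemma term_id {q p : ℂ} (hp : Good p) (hq : q ^ 2 = p) (L i k m : ℕ) (R c1 c2 : ℂ) :
    ((-1 : ℂ) ^ k * (q ^ (k + m + k * k + 3 * k) * q ^ (2 * k * (k + m)) * q ^ (2 * k * L) *
      (q ^ (2 * k * i + i))⁻¹) *
      (qp p p k * qp p p (k + i) / (qp p p (2 * k) * qp p p i)) *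
      (qp ((p ^ L)⁻¹) p k * qp ((p ^ (k + m))⁻¹) p k / (qp p p k * qp (p ^ (L + 2)) p k)) *
      (qp p p m / qp (p ^ (2 * k + 2)) p m) * R) * (c1 * c2) =
    ((-1) ^ k * ee p k ^ 2 * q ^ (k * k + 3 * k) * (1 - p ^ (2 * k + 1)) *
    hh p L k / qp (p ^ (L + 2)) p k * ((p ^ (k * i))⁻¹ * (q ^ i)⁻¹ * qp p p (k + i) / qp p p i *
    c1)) * (q ^ (k + m) * (qp p p (k + m) / qp p p (k + m + k + 1) * c2) * R) := by
  have h0 := hp.1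
  have hq0 : q ≠ 0 := by rintro rfl; simp at hq; exact h0 hq.symm
  have e1 : q ^ (2 * k * (k + m)) = (p ^ (k + m)) ^ k := by rw [← hq]; ring
  have e2 : q ^ (2 * k * L) = (p ^ L) ^ k := by rw [← hq]; ring
  have e3 : q ^ (2 * k * i + i) = p ^ (k * i) * q ^ i := by rw [← hq]; ring
  have e4 := hh_mul m k hp
  rw [add_comm m k] at e4
  have e5 := qp_add p p (2 * k + 1) m
  rw [← pow_succ'] at e5
  rw [show k + m + k + 1 = 2 * k + 1 + m by ring, e5, ← e4, qp_neg hp, qp_neg hp, e1, e2, e3,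
    qp_succ p p (2 * k), ← pow_succ', inv_pow, inv_pow]
  have a1 := qpp_ne hp k
  have a2 := qpp_ne hp (2 * k)
  have a3 := qpp_ne hp i
  have a4 := qpk_ne hp (L + 1) k
  have a5 := qpk_ne hp (2 * k + 1) m
  have a6 := hp.2 (2 * k + 1) (by omega)
  have a7 : (p ^ L) ^ k ≠ 0 := by positivity
  have a8 : (p ^ (k + m)) ^ k ≠ 0 := by positivity
  have b1 : p ^ (k * i) ≠ 0 := by positivity
  have b2 : q ^ i ≠ 0 := by positivity
  rw [show k + m + k * k + 3 * k = (k + m) + (k * k + 3 * k) by ring, pow_add]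
  exact term_alg _ _ _ _ _ _ _ _ _ _ _ _ _ _ _ _ _ _ _ _ _ a1 a2 a3 a4 a5 a6 a7 a8 b1 b2

lemma evP_eq {q : ℂ} (hp : Good (q ^ 2)) (C : ℂ → ℂ → ℕ → Polynomial ℂ) (L n : ℕ) (x : ℂ)
    (i j : Fin (L + 1)) : evP q L C n x i j = ∑ k ∈ Finset.range (L + 1), KK C q L x i k *
      (q ^ (n + (j : ℕ)) * cc C (q ^ 2) x (n + j) k * RR (q ^ 2) L n j k) := by
  have h0 := hp.1
  have hq0 : q ≠ 0 := by rintro rfl; simp at h0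
  rw [evP, Matrix.map_apply, Pm, Matrix.of_apply, Polynomial.eval_finsetSum]
  have hsub : Finset.Icc (i : ℕ) (min L (n + j)) ⊆ Finset.range (L + 1) := by
    intro k; simp only [Finset.mem_Icc, Finset.mem_range]; omega
  rw [← Finset.sum_subset hsub]
  · refine Finset.sum_congr rfl fun k hk => ?_
    have hk := Finset.mem_Icc.1 hk
    obtain ⟨m, hm⟩ := Nat.exists_eq_add_of_le (show k ≤ n + j by omega)
    simp only [Polynomial.eval_mul, Polynomial.eval_C]
    have z1 : q ^ ((n : ℤ) + (2 * (k : ℤ) + 1) * ((k : ℤ) - ((i : ℕ) : ℤ)) +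
                ((j : ℕ) : ℤ) * (2 * (k : ℤ) + 1) + 2 * (k : ℤ) * ((L : ℤ) + (n : ℤ) + 1) -
                (k : ℤ) ^ 2) = q ^ (k + m + k * k + 3 * k) * q ^ (2 * k * (k + m)) * q ^ (2 * k * L) *
      (q ^ (2 * k * (i : ℕ) + i))⁻¹ := by
      rw [← pow_add, ← pow_add, ← zpow_natCast, ← zpow_natCast, ← _root_.zpow_neg, ← zpow_add₀ hq0, ← hm]
      congr 1
      push_cast
      ring
    have z2 : q ^ (-(2 * (L : ℤ))) = ((q ^ 2) ^ L)⁻¹ := by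
      rw [_root_.zpow_neg, ← pow_mul, ← zpow_natCast]; push_cast; rfl
    have z3 : q ^ (-(2 * ((j : ℕ) : ℤ) + 2 * (n : ℤ))) = ((q ^ 2) ^ (k + m))⁻¹ := by
      rw [_root_.zpow_neg, ← pow_mul, ← hm, ← zpow_natCast]; congr 2; push_cast; ring
    have z4 : q ^ (2 * (L : ℤ) + 4) = (q ^ 2) ^ (L + 2) := by
      rw [← pow_mul, ← zpow_natCast]; push_cast; congr 1
    have z5 : q ^ (4 * (k : ℤ) + 4) = (q ^ 2) ^ (2 * k + 2) := by
      rw [← pow_mul, ← zpow_natCast]; push_cast; congr 1; ring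
    have z6 : q ^ (-(2 * (n : ℤ) + 2 * ((j : ℕ) : ℤ) + 2)) = ((q ^ 2) ^ (n + (j : ℕ) + 1))⁻¹ := by
      rw [_root_.zpow_neg, ← pow_mul, ← zpow_natCast]; push_cast; congr 2; ring
    have z7 : q ^ (-(2 * (L : ℤ) + 2)) = ((q ^ 2) ^ (L + 1))⁻¹ := by
      rw [_root_.zpow_neg, ← pow_mul, ← zpow_natCast]; push_cast; congr 2
    have z8 : q ^ (-(2 * (k : ℤ))) = ((q ^ 2) ^ k)⁻¹ := by
      rw [_root_.zpow_neg, ← pow_mul, ← zpow_natCast]; push_cast; rfl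
    have z9 : q ^ (2 * (k : ℤ) + 2) = (q ^ 2) ^ (k + 1) := by
      rw [← pow_mul, ← zpow_natCast]; push_cast; congr 1
    rw [z1, z2, z3, z4, z5, z6, z7, z8, z9, qRacah_eq hp, KK, dd, if_pos hk.1, cc, if_pos (by omega), hm,
      Nat.add_sub_cancel_left]
    exact term_id hp rfl L i k m _ _ _
  · intro k h1 h2
    simp only [Finset.mem_range, Finset.mem_Icc] at h1 h2
    by_cases h : (i : ℕ) ≤ k
    · rw [cc, if_neg (by omega)]; ring
    · rw [KK, dd, if_neg h]; ring

lemma ee_q (q : ℂ) (k : ℕ) : ee (q ^ 2) k * q ^ k = (-1) ^ k * q ^ (k * k) := by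
  induction k with
  | zero => simp [ee]
  | succ k ih =>
    rw [show ee (q ^ 2) (k + 1) = ee (q ^ 2) k * (-(q ^ 2) ^ k) from by
      simp [ee, Finset.prod_range_succ]]
    rw [show (k + 1) * (k + 1) = k * k + 2 * k + 1 by ring]
    generalize ee (q ^ 2) k = y at *
    rw [pow_succ q k, pow_succ (-1 : ℂ), pow_succ q (k * k + 2 * k), pow_add, pow_mul q 2]
    linear_combination (-(q ^ 2) ^ k * q) * ih

lemma evP_zero {q : ℂ} (hp : Good (q ^ 2)) {C : ℂ → ℂ → ℕ → Polynomial ℂ} (hC : IsUltra C) (L : ℕ) (x : ℂ) :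
    evP q L C 0 x = 1 := by
  have h0 := hp.1
  have hq0 : q ≠ 0 := by rintro rfl; simp at h0
  ext i j
  rw [evP_eq hp]
  have key : ∑ k ∈ Finset.range (L + 1), KK C q L x i k *
      (q ^ (0 + (j : ℕ)) * cc C (q ^ 2) x (0 + j) k * RR (q ^ 2) L 0 j k) =
      q ^ (j : ℕ) * SS C q (q ^ 2) x L j i := by
    rw [SS, Finset.mul_sum]
    refine Finset.sum_congr rfl fun k hk => ?_
    have hk := Finset.mem_range.1 hk
    rw [zero_add]
    by_cases h : k ≤ j
    · obtain ⟨d, hd⟩ := Nat.exists_eq_add_of_le (show k ≤ L by omega)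
      have s := saal hp k d
      rw [← hd] at s
      rw [RR_VV hp h (by omega), KK]
      have a4 := qpk_ne hp (L + 1) k
      rw [show L + 1 + 1 = L + 2 by ring] at a4
      generalize qp ((q ^ 2) ^ (L + 2)) (q ^ 2) k = Y at *
      have e := ee_q q k
      have e3 : (-1) ^ k * ee (q ^ 2) k ^ 3 * q ^ (3 * k) = q ^ (3 * (k * k)) := by
        have : ((-1 : ℂ) ^ k) ^ 4 = 1 := by rw [← pow_mul, mul_comm, pow_mul]; norm_num
        rw [pow_mul', pow_mul' q 3, mul_assoc, ← mul_pow, e, mul_pow]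
        linear_combination (q ^ (k * k)) ^ 3 * this
      have e4 : (-1) ^ k * ee (q ^ 2) k ^ 2 * q ^ (k * k + 3 * k) * hh (q ^ 2) L k / Y * VV (q ^ 2) L k
         = (q ^ 2) ^ (k * k) := by
        have : (-1) ^ k * ee (q ^ 2) k ^ 2 * q ^ (k * k + 3 * k) * hh (q ^ 2) L k / Y * VV (q ^ 2) L k
          = (-1) ^ k * ee (q ^ 2) k ^ 2 * q ^ (k * k + 3 * k) * (VV (q ^ 2) L k * hh (q ^ 2) L k) / Y := by ring
        rw [this, s]
        have : (-1) ^ k * ee (q ^ 2) k ^ 2 * q ^ (k * k + 3 * k) * (ee (q ^ 2) k * ((q ^ 2) ^ (k * k))⁻¹ * Y) / Y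
          = ((-1) ^ k * ee (q ^ 2) k ^ 3 * q ^ (3 * k)) * q ^ (k * k) * ((q ^ 2) ^ (k * k))⁻¹ := by
          rw [pow_add]; field_simp
        rw [this, e3]
        rw [← pow_mul]
        field_simp
        ring
      linear_combination (q ^ (j : ℕ) * (1 - (q ^ 2) ^ (2 * k + 1)) * dd C q (q ^ 2) x i k * cc C (q ^ 2) x j k) * e4
    · rw [cc, if_neg h]; ring
  rw [key, SS_eq hC hp rfl x L j i j (by omega) (by omega), Matrix.one_apply]
  by_cases h : i = j
  · subst h
    rw [if_pos rfl, if_pos rfl]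
    field_simp
  · rw [if_neg h, if_neg (fun h' => h (Fin.ext h'.symm)), mul_zero]

/-- leading coefficients -/
def GG (q p : ℂ) (L n j : ℕ) : ℂ :=
  2 ^ n * q ^ n * qp (p ^ (j + 1)) p n * qp (p ^ (L - j + 1)) p n /
    (qp p p n * qp (p ^ (L + 2)) p n)

lemma GG_ne {q p : ℂ} (hp : Good p) (hq : q ≠ 0) (L n j : ℕ) : GG q p L n j ≠ 0 := by
  have h1 := qpk_ne hp j n
  have h2 := qpk_ne hp (L - j) n
  have h3 := qpk_ne hp (L + 1) n
  have h4 := qpp_ne hp n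
  exact div_ne_zero (by positivity) (mul_ne_zero h4 h3)

lemma GG_n {q p : ℂ} (hp : Good p) (l n j : ℕ) :
    GG q p (j + l) (n + 1) j = GG q p (j + l) n j *
      (2 * q * (1 - p ^ (n + j + 1)) * (1 - p ^ (l + n + 1))) /
      ((1 - p ^ (n + 1)) * (1 - p ^ (j + l + n + 2))) := by
  have h1 := hp.2 (n + 1) (by omega)
  have h2 := hp.2 (j + l + n + 2) (by omega)
  have h3 := qpk_ne hp (j + l + 1) n
  have h4 := qpp_ne hp n
  rw [show j + l + 1 + 1 = j + l + 2 by ring] at h3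
  rw [GG, GG, Nat.add_sub_cancel_left, qp_succ, qp_succ, qp_succ, qp_succ, ← pow_add, ← pow_add,
    ← pow_add, ← pow_succ', show j + 1 + n = n + j + 1 by ring, show l + 1 + n = l + n + 1 by ring,
    show j + l + 2 + n = j + l + n + 2 by ring, pow_succ 2, pow_succ q]
  rw [div_mul_eq_mul_div, div_div, div_eq_div_iff (by positivity) (by positivity)]
  ring

lemma qp_sh (p : ℂ) (j n : ℕ) : qp (p ^ (j + 2)) p n * (1 - p ^ (j + 1)) =
    qp (p ^ (j + 1)) p n * (1 - p ^ (n + j + 1)) := by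
  have s1 := qp_succ (p ^ (j + 1)) p n
  have s2 := qp_succ' (p ^ (j + 1)) p n
  rw [← pow_succ] at s2
  rw [s2, ← pow_add, show j + 1 + n = n + j + 1 by ring] at s1
  linear_combination s1

lemma GG_j {q p : ℂ} (hp : Good p) (l n j : ℕ) :
    GG q p (j + l + 1) n (j + 1) = GG q p (j + l + 1) n j *
      ((1 - p ^ (n + j + 1)) * (1 - p ^ (l + 1))) / ((1 - p ^ (j + 1)) * (1 - p ^ (l + n + 1))) := by
  have h1 := hp.2 (j + 1) (by omega)
  have h2 := hp.2 (l + n + 1) (by omega)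
  have h3 := qpk_ne hp (j + l + 1 + 1) n
  have h4 := qpp_ne hp n
  have s1 := qp_sh p j n
  have s2 := qp_sh p l n
  rw [show n + l + 1 = l + n + 1 by ring] at s2
  rw [GG, GG, show j + l + 1 - (j + 1) + 1 = l + 1 by omega, show j + l + 1 - j + 1 = l + 2 by omega,
    show j + 1 + 1 = j + 2 by ring]
  rw [show j + l + 1 + 1 + 1 = j + l + 1 + 2 by ring] at h3
  rw [div_mul_eq_mul_div, div_div, div_eq_div_iff (by positivity) (by positivity)]
  linear_combination (2 ^ n * q ^ n * qp p p n * qp (p ^ (j + l + 1 + 2)) p n) *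
    (qp (p ^ (l + 1)) p n * (1 - p ^ (l + n + 1)) * s1 - qp (p ^ (j + 1)) p n * (1 - p ^ (n + j + 1)) * s2)

/-- upper entries -/
def xu (q p : ℂ) (n m : ℕ) : ℂ :=
  q ^ (2 * n + 1) / 2 * (1 - p ^ (m + 1)) ^ 2 / ((1 - p ^ (n + m + 1)) * (1 - p ^ (n + m + 2)))

/-- lower entries -/
def xd (q p : ℂ) (L n m : ℕ) : ℂ :=
  q ^ (2 * n + 1) / 2 * (1 - p ^ (L - m + 1)) ^ 2 /
    ((1 - p ^ (L - m + n + 1)) * (1 - p ^ (L - m + n + 2)))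

/-- diagonal entries -/
def yy (p : ℂ) (L n j : ℕ) : ℂ :=
  1 / 4 * ((1 - p ^ n) ^ 2 * (1 - p ^ (L + n + 1)) ^ 2) /
    ((1 - p ^ (n + j)) * (1 - p ^ (L - j + n)) * (1 - p ^ (n + j + 1)) * (1 - p ^ (L - j + n + 1)))

lemma algA (q Q R0 R1 R2 u v w s t y z g E : ℂ) (hq : q ≠ 0) (hu : u ≠ 0) (hv : v ≠ 0) (hw : w ≠ 0)
    (hs : s ≠ 0) (ht : t ≠ 0) (hy : y ≠ 0) (hz : z ≠ 0) (hg : g ≠ 0)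
    (h : R0 * E * s = w * (R1 * u * v + q * Q * t * y * R2)) :
    R1 / (g * (2 * q * w * s) / (u * v)) + R2 / (g * (w * t) / (y * z)) * (Q / 2 * t ^ 2 / (z * s)) =
      R0 / g * E / (2 * q * w ^ 2) := by
  have : R0 * E = w * (R1 * u * v + q * Q * t * y * R2) / s := by rw [← h]; field_simp
  rw [div_mul_eq_mul_div R0 g E, this]
  field_simp

lemma algA0 (q R0 R1 u v w s g E : ℂ) (hq : q ≠ 0) (hu : u ≠ 0) (hv : v ≠ 0) (hw : w ≠ 0)
    (hs : s ≠ 0) (hg : g ≠ 0)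
    (h : R0 * E * s = w * (R1 * u * v)) :
    R1 / (g * (2 * q * w * s) / (u * v)) = R0 / g * E / (2 * q * w ^ 2) := by
  have : R0 * E = w * (R1 * u * v) / s := by rw [← h]; field_simp
  rw [div_mul_eq_mul_div R0 g E, this]
  field_simp

lemma claimA {q p : ℂ} (hp : Good p) (hq : q ^ 2 = p) (l n j k : ℕ) (hk : k ≤ n + j + 1) (hkL : k ≤ j + l) :
    RR p (j + l) (n + 1) j k / GG q p (j + l) (n + 1) j +
      (if j < j + l then RR p (j + l) n (j + 1) k / GG q p (j + l) n (j + 1) * xd q p (j + l) n (j + 1) else 0) =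
    RR p (j + l) n j k / GG q p (j + l) n j * ((1 - p ^ (n + j + 1) * (p ^ k)⁻¹) *
      (1 - p ^ (n + j + k + 2))) / (2 * q * (1 - p ^ (n + j + 1)) ^ 2) := by
  have h0 := hp.1
  have hq0 : q ≠ 0 := by rintro rfl; simp at hq; exact h0 hq.symm
  have rec1 := RR_rec1 hp l n j k hk hkL
  have hQ : p ^ (n + 1) = q * q ^ (2 * n + 1) := by rw [← hq]; ring
  have hg := GG_ne hp hq0 (j + l) n j
  have b1 := hp.2 (n + 1) (by omega)
  have b2 := hp.2 (j + l + n + 2) (by omega)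
  have b3 := hp.2 (n + j + 1) (by omega)
  have b4 := hp.2 (l + n + 1) (by omega)
  rw [GG_n hp]
  rcases l with _ | l
  · rw [if_neg (by omega), add_zero]
    apply algA0 _ _ _ _ _ _ _ _ _ hq0 b1 b2 b3 b4 hg
    rw [rec1]; ring
  · rw [if_pos (by omega)]
    have b5 := hp.2 (l + 1) (by omega)
    have b6 := hp.2 (j + 1) (by omega)
    have b7 := hp.2 (l + n + 1) (by omega)
    have e := GG_j (q := q) hp l n j
    have e2 : xd q p (j + (l + 1)) n (j + 1) = q ^ (2 * n + 1) / 2 * (1 - p ^ (l + 1)) ^ 2 /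
      ((1 - p ^ (l + n + 1)) * (1 - p ^ (l + 1 + n + 1))) := by
      rw [xd, show j + (l + 1) - (j + 1) = l by omega, show l + n + 2 = l + 1 + n + 1 by ring]
    rw [e2]
    rw [← add_assoc j l 1] at *
    rw [e]
    apply algA _ _ _ _ _ _ _ _ _ _ _ _ _ _ hq0 b1 b2 b3 b4 b5 b6 b7 hg
    rw [rec1, hQ]

lemma algB1 (Q R w0 t y s w G : ℂ) (h1 : w0 ≠ 0) (h2 : t ≠ 0) (h3 : y ≠ 0) (h4 : s ≠ 0) (h5 : w ≠ 0)
    (h6 : G ≠ 0) : R / G * (Q / 2 * y ^ 2 / (w0 * w)) =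
      Q / 2 * (y * t * R) / (w * s) / (G * (w0 * t) / (y * s)) := by
  field_simp

lemma algB2 (q R w0 s0 u v s w G : ℂ) (h0 : q ≠ 0) (h1 : w0 ≠ 0) (h2 : s0 ≠ 0) (h3 : u ≠ 0) (h4 : s ≠ 0) (h5 : w ≠ 0)
    (h6 : G ≠ 0) (h7 : v ≠ 0) : R / G * (1 / 4 * (u ^ 2 * v ^ 2) / (w0 * s0 * w * s)) =
      q / 2 * (u * v * R) / (w * s) / (G * (2 * q * w0 * s0) / (u * v)) := by
  field_simp
  norm_num

lemma yy_zero (p : ℂ) (L j : ℕ) : yy p L 0 j = 0 := by simp [yy]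

lemma claimB {q p : ℂ} (hp : Good p) (hq : q ^ 2 = p) (l n j k : ℕ) (hk : k < n + j) (hkL : k ≤ j + l) :
    (if j = 0 then 0 else RR p (j + l) n (j - 1) k / GG q p (j + l) n (j - 1) * xu q p n (j - 1)) +
      RR p (j + l) (n - 1) j k / GG q p (j + l) (n - 1) j * yy p (j + l) n j =
    RR p (j + l) n j k / GG q p (j + l) n j * (q * (1 - p ^ (n + j)) / (2 * (1 - p ^ (n + j + 1)))) := by
  have h0 := hp.1
  have hq0 : q ≠ 0 := by rintro rfl; simp at hq; exact h0 hq.symm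
  have rec2 := RR_rec2 hp l n j k hk hkL
  have hQ : q ^ (2 * n + 1) = q * p ^ n := by rw [← hq]; ring
  have hg := GG_ne hp hq0 (j + l) n j
  have b3 := hp.2 (n + j + 1) (by omega)
  have b4 := hp.2 (l + n + 1) (by omega)
  have P1 : (if j = 0 then 0 else RR p (j + l) n (j - 1) k / GG q p (j + l) n (j - 1) * xu q p n (j - 1)) =
      q * p ^ n / 2 * ((1 - p ^ j) * (1 - p ^ (l + 1)) * RR p (j + l) n (j - 1) k) /
        ((1 - p ^ (n + j + 1)) * (1 - p ^ (l + n + 1))) / GG q p (j + l) n j := by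
    rcases j with _ | j
    · simp
    · rw [if_neg (by omega), Nat.add_sub_cancel, ← hQ, xu]
      have e := GG_j (q := q) hp l n j
      rw [show j + l + 1 = j + 1 + l by ring] at e
      rw [e]
      have c1 := hp.2 (n + j + 1) (by omega)
      have c2 := hp.2 (l + 1) (by omega)
      have c3 := hp.2 (j + 1) (by omega)
      have c4 := GG_ne hp hq0 (j + 1 + l) n j
      exact algB1 _ _ _ _ _ _ _ _ c1 c2 c3 b4 b3 c4
  have P2 : RR p (j + l) (n - 1) j k / GG q p (j + l) (n - 1) j * yy p (j + l) n j =
      q / 2 * ((1 - p ^ n) * (1 - p ^ (j + l + n + 1)) * RR p (j + l) (n - 1) j k) /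
        ((1 - p ^ (n + j + 1)) * (1 - p ^ (l + n + 1))) / GG q p (j + l) n j := by
    rcases n with _ | n
    · simp [yy_zero]
    · rw [Nat.add_sub_cancel, GG_n hp, yy, Nat.add_sub_cancel_left]
      have c1 := hp.2 (n + j + 1) (by omega)
      have c2 := hp.2 (l + n + 1) (by omega)
      have c3 := hp.2 (n + 1) (by omega)
      have c4 := GG_ne hp hq0 (j + l) n j
      have c5 := hp.2 (j + l + n + 2) (by omega)
      rw [show n + 1 + j = n + j + 1 by ring] at *
      exact algB2 _ _ _ _ _ _ _ _ _ hq0 c1 c2 c3 b4 b3 c4 c5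
  rw [P1, P2]
  have : RR p (j + l) n j k * (1 - p ^ (n + j)) = (p ^ n * (1 - p ^ j) * (1 - p ^ (l + 1)) * RR p (j + l) n (j - 1) k +
      (1 - p ^ n) * (1 - p ^ (j + l + n + 1)) * RR p (j + l) (n - 1) j k) / (1 - p ^ (l + n + 1)) := by
    rw [← rec2]; field_simp
  have : RR p (j + l) n j k / GG q p (j + l) n j * (q * (1 - p ^ (n + j)) / (2 * (1 - p ^ (n + j + 1)))) =
    (RR p (j + l) n j k * (1 - p ^ (n + j))) * q / (2 * (1 - p ^ (n + j + 1)) * GG q p (j + l) n j) := by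
    field_simp
  rw [this, ‹RR p (j + l) n j k * (1 - p ^ (n + j)) = _›]
  generalize 1 - p ^ (n + j + 1) = X at *
  generalize 1 - p ^ (l + n + 1) = Y at *
  generalize GG q p (j + l) n j = Z at *
  field_simp

/-- row terms -/
def TT (C : ℂ → ℂ → ℕ → Polynomial ℂ) (q p : ℂ) (L : ℕ) (x : ℂ) (n j k : ℕ) : ℂ :=
  q ^ (n + j) * cc C p x (n + j) k * (RR p L n j k / GG q p L n j)

lemma row {C : ℂ → ℂ → ℕ → Polynomial ℂ} (hC : IsUltra C) {q p : ℂ} (hp : Good p) (hq : q ^ 2 = p)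
    (L : ℕ) (x : ℂ) (n j k : ℕ) (hj : j ≤ L) (hk : k ≤ L) :
    x * TT C q p L x n j k = TT C q p L x (n + 1) j k +
      ((if j = 0 then 0 else TT C q p L x n (j - 1) k * xu q p n (j - 1)) +
      (if j < L then TT C q p L x n (j + 1) k * xd q p L n (j + 1) else 0)) +
      TT C q p L x (n - 1) j k * yy p L n j := by
  have h0 := hp.1
  have hq0 : q ≠ 0 := by rintro rfl; simp at hq; exact h0 hq.symm
  obtain ⟨l, rfl⟩ := Nat.exists_eq_add_of_le hj
  have b3 := hp.2 (n + j + 1) (by omega)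
  have pa : TT C q p (j + l) x (n + 1) j k +
      (if j < j + l then TT C q p (j + l) x n (j + 1) k * xd q p (j + l) n (j + 1) else 0) =
      q ^ (n + j + 1) * (cc C p x (n + j + 1) k * (RR p (j + l) n j k / GG q p (j + l) n j * ((1 - p ^ (n + j + 1) * (p ^ k)⁻¹) *
      (1 - p ^ (n + j + k + 2))) / (2 * q * (1 - p ^ (n + j + 1)) ^ 2))) := by
    have : TT C q p (j + l) x (n + 1) j k +
      (if j < j + l then TT C q p (j + l) x n (j + 1) k * xd q p (j + l) n (j + 1) else 0) =
      q ^ (n + j + 1) * (cc C p x (n + j + 1) k * (RR p (j + l) (n + 1) j k / GG q p (j + l) (n + 1) j +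
      (if j < j + l then RR p (j + l) n (j + 1) k / GG q p (j + l) n (j + 1) * xd q p (j + l) n (j + 1) else 0))) := by
      unfold TT
      rw [show n + 1 + j = n + j + 1 by ring, ← add_assoc n j 1]
      split_ifs <;> ring
    rw [this]
    by_cases h : k ≤ n + j + 1
    · rw [claimA hp hq l n j k h hk]
    · rw [cc, if_neg h]; ring
  have pb : (if j = 0 then 0 else TT C q p (j + l) x n (j - 1) k * xu q p n (j - 1)) +
      TT C q p (j + l) x (n - 1) j k * yy p (j + l) n j =
      q ^ (n + j) * (cc C p x (n + j - 1) k * (RR p (j + l) n j k / GG q p (j + l) n j * ((1 - p ^ (n + j)) / (2 * (1 - p ^ (n + j + 1)))))) := by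
    have : (if j = 0 then 0 else TT C q p (j + l) x n (j - 1) k * xu q p n (j - 1)) +
      TT C q p (j + l) x (n - 1) j k * yy p (j + l) n j =
      q ^ (n + j - 1) * (cc C p x (n + j - 1) k * ((if j = 0 then 0 else RR p (j + l) n (j - 1) k / GG q p (j + l) n (j - 1) * xu q p n (j - 1)) +
      RR p (j + l) (n - 1) j k / GG q p (j + l) (n - 1) j * yy p (j + l) n j)) := by
      rw [mul_add, mul_add]
      congr 1
      · by_cases h : j = 0
        · rw [if_pos h, if_pos h]; ring
        · rw [if_neg h, if_neg h, TT, show n + (j - 1) = n + j - 1 by omega]; ring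
      · rcases n with _ | n
        · rw [yy_zero]; ring
        · rw [TT, Nat.add_sub_cancel, show n + 1 + j - 1 = n + j by omega]; ring
    rw [this]
    by_cases h : k < n + j
    · rw [claimB hp hq l n j k h hk]
      obtain ⟨N, hN⟩ := Nat.exists_eq_add_of_lt (show 0 < n + j by omega)
      rw [hN, zero_add, Nat.add_sub_cancel, pow_succ]
      ring
    · by_cases hN : n + j = 0
      · have h1 : n = 0 := by omega
        have h2 : j = 0 := by omega
        subst h1 h2
        simp [yy_zero]
      · rw [cc, if_neg (by omega)]; ring
  have hc := cc_rec hC hp x (n + j) k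
  have key : x * cc C p x (n + j) k = cc C p x (n + j + 1) k * ((1 - p ^ (n + j + 1) * (p ^ k)⁻¹) *
      (1 - p ^ (n + j + k + 2))) / (2 * (1 - p ^ (n + j + 1)) ^ 2) +
      cc C p x (n + j - 1) k * ((1 - p ^ (n + j)) / (2 * (1 - p ^ (n + j + 1)))) := by
    generalize (p ^ k)⁻¹ = pk at *
    generalize hX : 1 - p ^ (n + j + 1) = X at *
    generalize hY : 1 - p ^ (n + j + 1) * pk = Y at *
    field_simp
    linear_combination -hc
  have pa' : q ^ (n + j + 1) * (cc C p x (n + j + 1) k * (RR p (j + l) n j k / GG q p (j + l) n j * ((1 - p ^ (n + j + 1) * (p ^ k)⁻¹) *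
      (1 - p ^ (n + j + k + 2))) / (2 * q * (1 - p ^ (n + j + 1)) ^ 2))) =
      q ^ (n + j) * (RR p (j + l) n j k / GG q p (j + l) n j) * (cc C p x (n + j + 1) k * ((1 - p ^ (n + j + 1) * (p ^ k)⁻¹) *
      (1 - p ^ (n + j + k + 2))) / (2 * (1 - p ^ (n + j + 1)) ^ 2)) := by
    rw [pow_succ q]
    generalize (1 - p ^ (n + j + 1) * (p ^ k)⁻¹) * (1 - p ^ (n + j + k + 2)) = E
    generalize 1 - p ^ (n + j + 1) = X at *
    generalize RR p (j + l) n j k / GG q p (j + l) n j = f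
    field_simp
  rw [pa'] at pa
  have lhs : x * TT C q p (j + l) x n j k = q ^ (n + j) * (RR p (j + l) n j k / GG q p (j + l) n j) * (x * cc C p x (n + j) k) := by
    rw [TT]; ring
  rw [lhs, key]
  linear_combination -pa - pb

lemma Gam_eq {q : ℂ} (L n : ℕ) : Gam q L n = Matrix.diagonal fun i : Fin (L + 1) => GG q (q ^ 2) L n i := by
  rw [Gam]
  congr 1
  funext i
  have hi : (i : ℕ) ≤ L := by omega
  have z1 : q ^ (2 * ((i : ℕ) : ℤ) + 2) = (q ^ 2) ^ ((i : ℕ) + 1) := by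
    rw [← pow_mul, ← zpow_natCast]; congr 1
  have z2 : q ^ (2 * (L : ℤ) - 2 * ((i : ℕ) : ℤ) + 2) = (q ^ 2) ^ (L - (i : ℕ) + 1) := by
    rw [← pow_mul, ← zpow_natCast]; congr 1; omega
  have z3 : q ^ (2 * (L : ℤ) + 4) = (q ^ 2) ^ (L + 2) := by
    rw [← pow_mul, ← zpow_natCast]; congr 1
  rw [z1, z2, z3, GG]

lemma Q_entry {q : ℂ} (hp : Good (q ^ 2)) (C : ℂ → ℂ → ℕ → Polynomial ℂ) (L n : ℕ) (x : ℂ)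
    (i j : Fin (L + 1)) : (evP q L C n x * (Gam q L n)⁻¹) i j =
      ∑ k ∈ Finset.range (L + 1), KK C q L x i k * TT C q (q ^ 2) L x n j k := by
  have h0 := hp.1
  have hq0 : q ≠ 0 := by rintro rfl; simp at h0
  have hinv : (Gam q L n)⁻¹ = Matrix.diagonal fun i : Fin (L + 1) => (GG q (q ^ 2) L n i)⁻¹ := by
    apply Matrix.inv_eq_right_inv
    rw [Gam_eq, Matrix.diagonal_mul_diagonal]
    rw [← Matrix.diagonal_one]
    congr 1
    funext i
    exact mul_inv_cancel₀ (GG_ne hp hq0 _ _ _)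
  rw [hinv, Matrix.mul_diagonal, evP_eq hp, Finset.sum_mul]
  refine Finset.sum_congr rfl fun k _ => ?_
  rw [TT]; ring

lemma X_sum (f a b : ℕ → ℂ) (L j : ℕ) (hj : j ≤ L) :
    ∑ m ∈ Finset.range (L + 1), f m * (if j = m + 1 then a m else if m = j + 1 then b m else 0) =
      (if j = 0 then 0 else f (j - 1) * a (j - 1)) + (if j < L then f (j + 1) * b (j + 1) else 0) := by
  have : ∀ m ∈ Finset.range (L + 1), f m * (if j = m + 1 then a m else if m = j + 1 then b m else 0) =
      (if j = m + 1 then f m * a m else 0) + (if m = j + 1 then f m * b m else 0) := by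
    intro m _
    by_cases h1 : j = m + 1
    · rw [if_pos h1, if_pos h1, if_neg (by omega), add_zero]
    · rw [if_neg h1, if_neg h1]
      split_ifs <;> ring
  rw [Finset.sum_congr rfl this, Finset.sum_add_distrib, Finset.sum_ite_eq' (Finset.range (L + 1)) (j + 1)]
  congr 1
  · rcases j with _ | j
    · rw [if_pos rfl]
      exact Finset.sum_eq_zero fun m _ => if_neg (by omega)
    · simp only [Nat.add_right_cancel_iff, Nat.add_sub_cancel, Nat.succ_ne_zero, if_false]
      rw [Finset.sum_ite_eq, if_pos (Finset.mem_range.2 (by omega))]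
  · simp only [Finset.mem_range, Nat.add_lt_add_iff_right]

lemma Xmat_apply (q : ℂ) (L n : ℕ) (m j : Fin (L + 1)) : Xmat q L n m j =
    if (j : ℕ) = (m : ℕ) + 1 then xu q (q ^ 2) n m else if (m : ℕ) = (j : ℕ) + 1 then
      xd q (q ^ 2) L n m else 0 := by
  have hi : (m : ℕ) ≤ L := by omega
  have z1 : q ^ (2 * ((m : ℕ) : ℤ) + 2) = (q ^ 2) ^ ((m : ℕ) + 1) := by
    rw [← pow_mul, ← zpow_natCast]; congr 1
  have z2 : q ^ (2 * (n : ℤ) + 2 * ((m : ℕ) : ℤ) + 2) = (q ^ 2) ^ (n + (m : ℕ) + 1) := by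
    rw [← pow_mul, ← zpow_natCast]; congr 1; omega
  have z3 : q ^ (2 * (n : ℤ) + 2 * ((m : ℕ) : ℤ) + 4) = (q ^ 2) ^ (n + (m : ℕ) + 2) := by
    rw [← pow_mul, ← zpow_natCast]; congr 1; omega
  have z4 : q ^ (2 * (L : ℤ) - 2 * ((m : ℕ) : ℤ) + 2) = (q ^ 2) ^ (L - (m : ℕ) + 1) := by
    rw [← pow_mul, ← zpow_natCast]; congr 1; omega
  have z5 : q ^ (2 * (L : ℤ) - 2 * ((m : ℕ) : ℤ) + 2 * (n : ℤ) + 2) = (q ^ 2) ^ (L - (m : ℕ) + n + 1) := by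
    rw [← pow_mul, ← zpow_natCast]; congr 1; omega
  have z6 : q ^ (2 * (L : ℤ) - 2 * ((m : ℕ) : ℤ) + 2 * (n : ℤ) + 4) = (q ^ 2) ^ (L - (m : ℕ) + n + 2) := by
    rw [← pow_mul, ← zpow_natCast]; congr 1; omega
  rw [Xmat, Matrix.of_apply, z1, z2, z3, z4, z5, z6, xu, xd]

lemma Ymat_eq (q : ℂ) (L n : ℕ) : Ymat q L n = Matrix.diagonal fun i : Fin (L + 1) => yy (q ^ 2) L n i := by
  rw [Ymat]
  congr 1
  funext m
  have hi : (m : ℕ) ≤ L := by omega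
  have z1 : q ^ (2 * (n : ℤ)) = (q ^ 2) ^ n := by
    rw [← pow_mul, ← zpow_natCast]; congr 1
  have z2 : q ^ (2 * (L : ℤ) + 2 * (n : ℤ) + 2) = (q ^ 2) ^ (L + n + 1) := by
    rw [← pow_mul, ← zpow_natCast]; congr 1; omega
  have z3 : q ^ (2 * (n : ℤ) + 2 * ((m : ℕ) : ℤ)) = (q ^ 2) ^ (n + (m : ℕ)) := by
    rw [← pow_mul, ← zpow_natCast]; congr 1; omega
  have z4 : q ^ (2 * (L : ℤ) + 2 * (n : ℤ) - 2 * ((m : ℕ) : ℤ)) = (q ^ 2) ^ (L - (m : ℕ) + n) := by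
    rw [← pow_mul, ← zpow_natCast]; congr 1; omega
  have z5 : q ^ (2 * (n : ℤ) + 2 * ((m : ℕ) : ℤ) + 2) = (q ^ 2) ^ (n + (m : ℕ) + 1) := by
    rw [← pow_mul, ← zpow_natCast]; congr 1; omega
  have z6 : q ^ (2 * (L : ℤ) - 2 * ((m : ℕ) : ℤ) + 2 * (n : ℤ) + 2) = (q ^ 2) ^ (L - (m : ℕ) + n + 1) := by
    rw [← pow_mul, ← zpow_natCast]; congr 1; omega
  rw [z1, z2, z3, z4, z5, z6, yy]

lemma full_rec {q : ℂ} (hp : Good (q ^ 2)) {C : ℂ → ℂ → ℕ → Polynomial ℂ} (hC : IsUltra C) (L n : ℕ)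
    (x : ℂ) : x • (evP q L C n x * (Gam q L n)⁻¹) =
          evP q L C (n + 1) x * (Gam q L (n + 1))⁻¹ +
            evP q L C n x * (Gam q L n)⁻¹ * Xmat q L n +
            evP q L C (n - 1) x * (Gam q L (n - 1))⁻¹ * Ymat q L n := by
  ext i j
  have hX : (evP q L C n x * (Gam q L n)⁻¹ * Xmat q L n) i j =
      ∑ k ∈ Finset.range (L + 1), KK C q L x i k *
        ((if (j : ℕ) = 0 then 0 else TT C q (q ^ 2) L x n (j - 1) k * xu q (q ^ 2) n (j - 1)) +
      (if (j : ℕ) < L then TT C q (q ^ 2) L x n (j + 1) k * xd q (q ^ 2) L n (j + 1) else 0)) := by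
    rw [Matrix.mul_apply]
    simp only [Q_entry hp, Xmat_apply]
    rw [Fin.sum_univ_eq_sum_range (fun m => (∑ k ∈ Finset.range (L + 1), KK C q L x i k * TT C q (q ^ 2) L x n m k) *
      (if (j : ℕ) = m + 1 then xu q (q ^ 2) n m else if m = (j : ℕ) + 1 then
      xd q (q ^ 2) L n m else 0))]
    rw [X_sum _ _ _ L j (by omega)]
    simp only [mul_add, Finset.sum_add_distrib]
    congr 1
    · split_ifs
      · simp
      · rw [Finset.sum_mul]; exact Finset.sum_congr rfl fun k _ => by ring
    · split_ifs
      · rw [Finset.sum_mul]; exact Finset.sum_congr rfl fun k _ => by ring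
      · simp
  rw [Matrix.add_apply, Matrix.add_apply, hX, Matrix.smul_apply, Q_entry hp, Q_entry hp, Ymat_eq,
    Matrix.mul_diagonal, Q_entry hp, smul_eq_mul, Finset.mul_sum, Finset.sum_mul,
    ← Finset.sum_add_distrib, ← Finset.sum_add_distrib]
  refine Finset.sum_congr rfl fun k hk => ?_
  have hk := Finset.mem_range.1 hk
  have := row hC hp rfl L x n j k (by omega) (by omega)
  linear_combination KK C q L x i k * this

lemma Q_zero {q : ℂ} (hp : Good (q ^ 2)) {C : ℂ → ℂ → ℕ → Polynomial ℂ} (hC : IsUltra C) (L : ℕ)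
    (x : ℂ) : evP q L C 0 x * (Gam q L 0)⁻¹ = 1 := by
  have : Gam q L 0 = 1 := by
    rw [Gam_eq, ← Matrix.diagonal_one]
    congr 1
    funext i
    simp [GG, qp_zero]
  rw [this, evP_zero hp hC]; simp

/-- the monic polynomials `Q_n(x) = P_n(x) Γ_n⁻¹` satisfy `Q_0 = I`,
`x Q_0(x) = Q_1(x) + X_0`, and for `n ≥ 1` the three-term recurrence
`x Q_n(x) = Q_{n+1}(x) + Q_n(x) X_n + Q_{n-1}(x) Y_n`. -/
theorem stmt4 (q : ℝ) (hq0 : 0 < q) (hq1 : q < 1) (L : ℕ)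
    (C : ℂ → ℂ → ℕ → Polynomial ℂ) (hC : IsUltra C) :
    (∀ x : ℂ, evP (q : ℂ) L C 0 x * (Gam (q : ℂ) L 0)⁻¹ = 1) ∧
      (∀ x : ℂ,
        x • (evP (q : ℂ) L C 0 x * (Gam (q : ℂ) L 0)⁻¹) =
          evP (q : ℂ) L C 1 x * (Gam (q : ℂ) L 1)⁻¹ + Xmat (q : ℂ) L 0) ∧
      ∀ n : ℕ, 1 ≤ n → ∀ x : ℂ,
        x • (evP (q : ℂ) L C n x * (Gam (q : ℂ) L n)⁻¹) =
          evP (q : ℂ) L C (n + 1) x * (Gam (q : ℂ) L (n + 1))⁻¹ +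
            evP (q : ℂ) L C n x * (Gam (q : ℂ) L n)⁻¹ * Xmat (q : ℂ) L n +
            evP (q : ℂ) L C (n - 1) x * (Gam (q : ℂ) L (n - 1))⁻¹ * Ymat (q : ℂ) L n := by
  have hp := good_of hq0 hq1
  refine ⟨fun x => Q_zero hp hC L x, fun x => ?_, fun n _ x => full_rec hp hC L n x⟩
  have h := full_rec hp hC L 0 x
  have hY : Ymat (q : ℂ) L 0 = 0 := by
    rw [Ymat_eq]
    ext i j
    simp [Matrix.diagonal_apply, yy_zero]
  rw [hY, mul_zero, add_zero] at h
  rw [h, Q_zero hp hC, one_mul]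

end
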